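/- arXiv:1612.09451 — 3 statements merged into one kernel-verified Lean document; each statement's English description precedes it below -/
import Mathlib

section
/- Let R be a regular local ring of Krull dimension 2, let M be a finitely generated torsion-free R-module of rank 2, and let A ⊆ M be a submodule of rank 1 such that B := M/A is torsion-free. Regard A as a submodule of the bidual M^{∨∨} via the (injective) evaluation map ε_M, and set N := (M^{∨∨}/A)/Tors(M^{∨∨}/A), where Tors denotes the torsion submodule. Then the canonical injection β : B → N induced by the inclusion M ⊆ M^{∨∨} is injective, and there is an exact sequence of finite-length R-modules 0 → A^{∨∨}/A → M^{∨∨}/M → B^{∨∨}/B → N^{∨∨}/N → 0, in which the first map is induced by the bidual of the inclusion A → M, the second by the bidual of the projection M → B, and the third by the bidual of β. -/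
/-!
Statement 2 (local form of Proposition 3.1 of the paper): over a regular local ring of Krull
dimension 2, for a rank 2 finitely generated torsion-free module `M` and a rank 1 submodule
`A ⊆ M` with torsion-free quotient `B = M ⧸ A`, setting
`N := (M^{∨∨}/A)/Tors(M^{∨∨}/A)`, the canonical map `β : B → N` is injective and there is an
exact sequence of finite-length modules
`0 → A^{∨∨}/A → M^{∨∨}/M → B^{∨∨}/B → N^{∨∨}/N → 0`
whose maps are induced by the biduals of `A ↪ M`, `M ↠ B` and `β`.
-/

open Module LinearMap

/-- The cokernel `P^{∨∨}/P` of the canonical evaluation map `ε_P : P → P^{∨∨}`. -/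
abbrev evalCoker (R : Type*) [CommRing R] (P : Type*) [AddCommGroup P] [Module R P] :=
  Dual R (Dual R P) ⧸ LinearMap.range (Module.Dual.eval R P)

theorem aux_prime_gen {R : Type*} [CommRing R] [IsNoetherianRing R] [IsLocalRing R]
    {a b : R} (hab : Ideal.span {a, b} = IsLocalRing.maximalIdeal R)
    (P : Ideal R) [hP : P.IsPrime] (ha : a ∈ P) (hb : b ∉ P) : P = Ideal.span {a} := by
  apply le_antisymm _ (by simpa [Ideal.span_le] using ha)
  refine Submodule.le_of_le_smul_of_le_jacobson_bot (I := IsLocalRing.maximalIdeal R)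
    (IsNoetherian.noetherian P) (IsLocalRing.maximalIdeal_le_jacobson _) ?_
  intro y hy
  have h1 : y ∈ Ideal.span {a, b} := by
    rw [hab]; exact IsLocalRing.le_maximalIdeal hP.ne_top hy
  obtain ⟨r, s, rfl⟩ := Ideal.mem_span_pair.1 h1
  have hsb : s * b ∈ P := by
    have := P.sub_mem hy (P.mul_mem_left r ha)
    simpa using this
  have hs : s ∈ P := (hP.mem_or_mem hsb).resolve_right hb
  refine Submodule.add_mem_sup (Ideal.mul_mem_left _ _ (Ideal.mem_span_singleton_self a)) ?_
  rw [mul_comm]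
  refine Submodule.smul_mem_smul ?_ hs
  rw [← hab]; exact Ideal.subset_span (by simp)

theorem aux_prime_max {R : Type*} [CommRing R] [IsLocalRing R]
    {a b : R} (hab : Ideal.span {a, b} = IsLocalRing.maximalIdeal R)
    (P : Ideal R) [hP : P.IsPrime] (ha : a ∈ P) (hb : b ∈ P) : P = IsLocalRing.maximalIdeal R := by
  apply le_antisymm (IsLocalRing.le_maximalIdeal hP.ne_top)
  rw [← hab, Ideal.span_le]
  rintro x (rfl | rfl) <;> assumption

theorem aux_regular {R : Type*} [CommRing R] [IsDomain R] [IsNoetherianRing R] [IsLocalRing R]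
    (hdim : ringKrullDim R = 2)
    {a b : R} (hab : Ideal.span {a, b} = IsLocalRing.maximalIdeal R) :
    Prime a ∧ ¬ a ∣ b := by
  have hht : (IsLocalRing.maximalIdeal R).height = 2 := by
    have := IsLocalRing.maximalIdeal_height_eq_ringKrullDim (R := R)
    rw [hdim] at this
    exact WithBot.coe_injective this
  have hpr : ∀ x : R, Ideal.span {x} ≠ IsLocalRing.maximalIdeal R := by
    intro x hx
    have h := Ideal.height_span_singleton_le_one (x := x) (by
      have : x ∈ IsLocalRing.maximalIdeal R := hx ▸ Ideal.mem_span_singleton_self x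
      simpa using this)
    rw [hx, hht] at h
    exact absurd h (by decide)
  have ham : a ∈ IsLocalRing.maximalIdeal R := by
    rw [← hab]; exact Ideal.subset_span (by simp)
  have hle : Ideal.span {a} ≤ IsLocalRing.maximalIdeal R := by
    simpa [Ideal.span_le] using ham
  obtain ⟨P, hPm, -⟩ := Ideal.exists_minimalPrimes_le hle
  have hP : P.IsPrime := hPm.1.1
  have haP : a ∈ P := hPm.1.2 (Ideal.mem_span_singleton_self a)
  have hbP : b ∉ P := by
    intro hb
    have h := Ideal.height_le_one_of_isPrincipal_of_mem_minimalPrimes _ P hPm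
    rw [aux_prime_max hab P haP hb, hht] at h
    exact absurd h (by decide)
  have hPa := aux_prime_gen hab P haP hbP
  have ha0 : a ≠ 0 := by
    rintro rfl
    exact hpr b (by rw [← hab]; simp)
  subst hPa
  exact ⟨(Ideal.span_singleton_prime ha0).1 hP, fun h => hbP (Ideal.mem_span_singleton.2 h)⟩

theorem aux_pir {R : Type*} [CommRing R] [IsNoetherianRing R] [IsLocalRing R]
    {a b : R} (hab : Ideal.span {a, b} = IsLocalRing.maximalIdeal R) :
    IsPrincipalIdealRing (R ⧸ Ideal.span {a}) := by
  apply IsPrincipalIdealRing.of_prime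
  intro Q hQ
  set f := Ideal.Quotient.mk (Ideal.span {a})
  have hmap : (Q.comap f).map f = Q := Ideal.map_comap_of_surjective f Ideal.Quotient.mk_surjective Q
  have hfa : f a = 0 := Ideal.Quotient.eq_zero_iff_mem.2 (Ideal.mem_span_singleton_self a)
  have ha : a ∈ Q.comap f := by simp [Ideal.mem_comap, hfa]
  by_cases hb : b ∈ Q.comap f
  · have := aux_prime_max hab _ ha hb
    rw [this, ← hab, Ideal.map_span, Set.image_pair, hfa] at hmap
    rw [← hmap]
    exact ⟨f b, by simp⟩
  · have := aux_prime_gen hab _ ha hb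
    rw [this, Ideal.map_span, Set.image_singleton, hfa] at hmap
    rw [← hmap]
    exact ⟨0, rfl⟩

theorem aux_principal1 {R : Type*} [CommRing R] [IsNoetherianRing R] [IsLocalRing R]
    {a b : R} (hab : Ideal.span {a, b} = IsLocalRing.maximalIdeal R)
    (P : Ideal R) [hP : P.IsPrime] (ha : a ∉ P) : P.IsPrincipal := by
  have := aux_pir hab
  set f := Ideal.Quotient.mk (Ideal.span {a})
  obtain ⟨x', hx'⟩ := (IsPrincipalIdealRing.principal (P.map f)).principal
  have hx'' : x' ∈ P.map f := by rw [hx']; exact Submodule.mem_span_singleton_self x'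
  obtain ⟨x, hx, rfl⟩ := (Ideal.mem_map_iff_of_surjective f Ideal.Quotient.mk_surjective).1 hx''
  refine ⟨x, ?_⟩
  apply le_antisymm _ (by simpa [Submodule.span_le] using hx)
  refine Submodule.le_of_le_smul_of_le_jacobson_bot (I := IsLocalRing.maximalIdeal R)
    (IsNoetherian.noetherian P) (IsLocalRing.maximalIdeal_le_jacobson _) ?_
  intro y hy
  have h1 : f y ∈ P.map f := Ideal.mem_map_of_mem f hy
  rw [hx'] at h1
  obtain ⟨c', hc'⟩ := Submodule.mem_span_singleton.1 h1
  obtain ⟨c, rfl⟩ := Ideal.Quotient.mk_surjective c'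
  have h2 : y - c * x ∈ Ideal.span {a} := by
    rw [← Ideal.Quotient.eq_zero_iff_mem, map_sub, map_mul]
    simp only [smul_eq_mul] at hc'
    exact sub_eq_zero.2 hc'.symm
  obtain ⟨t, ht⟩ := Ideal.mem_span_singleton.1 h2
  have hat : a * t ∈ P := ht ▸ P.sub_mem hy (P.mul_mem_left c hx)
  have htP : t ∈ P := (hP.mem_or_mem hat).resolve_left ha
  have : y = c * x + a * t := by rw [← ht]; ring
  rw [this]
  refine Submodule.add_mem_sup (Submodule.mem_span_singleton.2 ⟨c, rfl⟩) ?_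
  refine Submodule.smul_mem_smul ?_ htP
  rw [← hab]; exact Ideal.subset_span (by simp)

theorem aux_principal {R : Type*} [CommRing R] [IsNoetherianRing R] [IsLocalRing R]
    {a b : R} (hab : Ideal.span {a, b} = IsLocalRing.maximalIdeal R)
    (P : Ideal R) [hP : P.IsPrime] (hPm : P ≠ IsLocalRing.maximalIdeal R) : P.IsPrincipal := by
  by_cases ha : a ∈ P
  · by_cases hb : b ∈ P
    · exact absurd (aux_prime_max hab P ha hb) hPm
    · rw [Set.pair_comm] at hab
      exact aux_principal1 hab P hb
  · exact aux_principal1 hab P ha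

theorem aux_factor {R : Type*} [CommRing R] [IsDomain R] [IsNoetherianRing R]
    (P : Ideal R) [hP : P.IsPrime] (hPp : P.IsPrincipal)
    (M : Type*) [AddCommGroup M] [Module R M] [Module.Finite R M] [Module.IsTorsionFree R M] :
    ∃ s ∉ P, ∃ (n : ℕ) (ι : (Fin n → R) →ₗ[R] M) (ρ : M →ₗ[R] (Fin n → R)),
      ∀ x, ι (ρ x) = s • x := by
  let S := P.primeCompl
  let L := Localization.AtPrime P
  let MP := LocalizedModule S M
  have hmax : (IsLocalRing.maximalIdeal L).IsPrincipal := by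
    rw [← Localization.AtPrime.map_eq_maximalIdeal]
    obtain ⟨x, hx⟩ := hPp
    have h : Ideal.map (algebraMap R (Localization.AtPrime P)) P =
        Ideal.map (algebraMap R (Localization.AtPrime P)) (Ideal.span {x}) :=
      congrArg (Ideal.map (algebraMap R (Localization.AtPrime P))) hx
    rw [h, Ideal.map_span, Set.image_singleton]
    exact ⟨_, rfl⟩
  have hL : IsPrincipalIdealRing L :=
    ((tfae_of_isNoetherianRing_of_isLocalRing_of_isDomain L).out 4 0).1 hmax
  have hfin : Module.Finite L MP := inferInstance
  have htf : Module.IsTorsionFree L MP := inferInstance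
  have hfree : Module.Free L MP := inferInstance
  let e : MP ≃ₗ[L] (Fin (Module.finrank L MP) → L) := (Module.finBasis L MP).equivFun
  set n := Module.finrank L MP
  let g : (Fin n → R) →ₗ[R] (Fin n → L) := LinearMap.pi fun i => Algebra.linearMap R L ∘ₗ LinearMap.proj i
  have hg : IsLocalizedModule S g := inferInstance
  let f : M →ₗ[R] MP := LocalizedModule.mkLinearMap S M
  have hfpM : Module.FinitePresentation R M := Module.finitePresentation_of_finite R M
  obtain ⟨ρ, s, hρ⟩ := Module.FinitePresentation.exists_lift_of_isLocalizedModule S g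
    ((e.toLinearMap.restrictScalars R) ∘ₗ f)
  obtain ⟨ι, t, hι⟩ := Module.FinitePresentation.exists_lift_of_isLocalizedModule S f
    ((e.symm.toLinearMap.restrictScalars R) ∘ₗ g)
  refine ⟨(s * t : S), (s * t).2, n, ι, ρ, fun x => ?_⟩
  have h1 := LinearMap.congr_fun hι (ρ x)
  have h2 := LinearMap.congr_fun hρ x
  simp only [LinearMap.comp_apply, LinearMap.smul_apply, LinearMap.restrictScalars_apply, LinearEquiv.coe_coe] at h1 h2
  have h3 : f (ι (ρ x)) = f ((s * t : S) • x) := by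
    rw [h1, h2, map_smul_of_tower]
    have : e.symm (s • e (f x)) = s • f x := by
      have := (e.symm.toLinearMap.restrictScalars R).map_smul (s : R) (e (f x))
      rw [LinearMap.restrictScalars_apply, LinearMap.restrictScalars_apply] at this
      exact this.trans (congrArg (fun z => (s : R) • z) (e.symm_apply_apply (f x)))
    rw [this, smul_smul, mul_comm]
  obtain ⟨c, hc⟩ := IsLocalizedModule.exists_of_eq (S := S) (f := f) h3
  have hc0 : (c : R) ≠ 0 := fun h => c.2 (h ▸ P.zero_mem)
  exact smul_right_injective M hc0 hc

theorem aux_fl {R : Type*} [CommRing R] [IsNoetherianRing R] [IsLocalRing R]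
    (Q : Type*) [AddCommGroup Q] [Module R Q] [Module.Finite R Q]
    (h : ∀ P : Ideal R, P.IsPrime → P ≠ IsLocalRing.maximalIdeal R → ∃ s ∉ P, ∀ x : Q, s • x = 0) :
    IsFiniteLength R Q ∧ ∃ n : ℕ, ∀ r ∈ IsLocalRing.maximalIdeal R, ∀ x : Q, r ^ n • x = 0 := by
  set J := Module.annihilator R Q
  have hJ : ∀ P : Ideal R, P.IsPrime → J ≤ P → P = IsLocalRing.maximalIdeal R := by
    intro P hP hJP
    by_contra hne
    obtain ⟨s, hs, hsx⟩ := h P hP hne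
    exact hs (hJP (Module.mem_annihilator.2 hsx))
  constructor
  · have : Ring.KrullDimLE 0 (R ⧸ J) := by
      rw [Ring.krullDimLE_zero_iff]
      intro I hI
      have h1 := hJ (I.comap (Ideal.Quotient.mk J)) inferInstance (by
        conv_lhs => rw [← Ideal.mk_ker (I := J)]
        exact Ideal.comap_mono bot_le)
      refine Ideal.isMaximal_of_isIntegral_of_isMaximal_comap (R := R) I ?_
      convert! IsLocalRing.maximalIdeal.isMaximal R
    have : IsArtinianRing (R ⧸ J) := IsNoetherianRing.isArtinianRing_of_krullDimLE_zero
    let _ : Module (R ⧸ J) Q := Module.quotientAnnihilator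
    have : IsScalarTower R (R ⧸ J) Q := .of_algebraMap_smul fun r x => rfl
    have : Module.Finite (R ⧸ J) Q := Module.Finite.of_restrictScalars_finite R _ _
    have : IsArtinian (R ⧸ J) Q := inferInstance
    have : IsArtinian R Q := isArtinian_of_surjective_algebraMap (R := R ⧸ J) Ideal.Quotient.mk_surjective
    exact isFiniteLength_iff_isNoetherian_isArtinian.2 ⟨inferInstance, this⟩
  · have h1 : IsLocalRing.maximalIdeal R ≤ J.radical := by
      rw [Ideal.radical_eq_sInf]
      exact le_sInf fun P hP => (hJ P hP.2 hP.1).ge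
    obtain ⟨n, hn⟩ := Ideal.exists_pow_le_of_le_radical_of_fg h1 (IsNoetherian.noetherian _)
    exact ⟨n, fun r hr => Module.mem_annihilator.1 (hn (Ideal.pow_mem_pow hr n))⟩

theorem aux_eval {R : Type*} [CommRing R] [IsDomain R] [IsNoetherianRing R] [IsLocalRing R]
    {a b : R} (hab : Ideal.span {a, b} = IsLocalRing.maximalIdeal R)
    (P : Type*) [AddCommGroup P] [Module R P] [Module.Finite R P] [Module.IsTorsionFree R P] :
    Function.Injective (Module.Dual.eval R P) ∧ IsFiniteLength R (evalCoker R P) ∧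
    ∃ n : ℕ, ∀ k ≥ n, ∀ r ∈ IsLocalRing.maximalIdeal R, ∀ ξ : Dual R (Dual R P),
      ∃ x, Module.Dual.eval R P x = r ^ k • ξ := by
  constructor
  · obtain ⟨s, hs, n, ι, ρ, h⟩ := aux_factor (⊥ : Ideal R) inferInstance P
    have hs0 : s ≠ 0 := by simpa using hs
    rw [← LinearMap.ker_eq_bot, LinearMap.ker_eq_bot']
    intro x hx
    have hρ : ρ x = 0 := by
      ext i
      have := LinearMap.congr_fun hx (LinearMap.proj i ∘ₗ ρ)
      simpa using this
    have h1 := h x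
    rw [hρ, map_zero] at h1
    exact (smul_eq_zero.1 h1.symm).resolve_left hs0
  · have key := aux_fl (R := R) (evalCoker R P) (by
      intro p hp hpm
      obtain ⟨s, hs, n, ι, ρ, h⟩ := aux_factor p (aux_principal hab p hpm) P
      refine ⟨s, hs, fun x => ?_⟩
      obtain ⟨ξ, rfl⟩ := Submodule.mkQ_surjective _ x
      rw [← map_smul, Submodule.mkQ_apply, Submodule.Quotient.mk_eq_zero]
      obtain ⟨y, hy⟩ := (Module.bijective_dual_eval R (Fin n → R)).2 (ρ.dualMap.dualMap ξ)
      refine ⟨ι y, ?_⟩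
      ext φ
      have h2 := LinearMap.congr_fun hy (φ ∘ₗ ι)
      simp only [Module.Dual.eval_apply, LinearMap.comp_apply, LinearMap.dualMap_apply] at h2 ⊢
      rw [h2]
      have h3 : ρ.dualMap (φ ∘ₗ ι) = s • φ := by
        ext z
        simp [h]
      rw [h3]
      simp)
    refine ⟨key.1, ?_⟩
    obtain ⟨n, hn⟩ := key.2
    refine ⟨n, fun k hk r hr ξ => ?_⟩
    have h1 := hn r hr (Submodule.mkQ _ ξ)
    rw [← map_smul, Submodule.mkQ_apply, Submodule.Quotient.mk_eq_zero] at h1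
    obtain ⟨x, hx⟩ := h1
    refine ⟨r ^ (k - n) • x, ?_⟩
    rw [map_smul, hx, smul_smul, ← pow_add, Nat.sub_add_cancel hk]

theorem aux_dual {R : Type*} [CommRing R] [IsDomain R] {c d : R} (hc : c ≠ 0)
    (hcd : ∀ x, c ∣ d * x → c ∣ x)
    {P Q : Type*} [AddCommGroup P] [Module R P] [AddCommGroup Q] [Module R Q]
    (φ : P →ₗ[R] Q) (hφ : Function.Injective φ)
    (h1 : ∀ y, ∃ x, φ x = c • y) (h2 : ∀ y, ∃ x, φ x = d • y) :
    Function.Bijective φ.dualMap := by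
  constructor
  · rw [← LinearMap.ker_eq_bot, LinearMap.ker_eq_bot']
    intro f hf
    ext y
    obtain ⟨x, hx⟩ := h1 y
    have h := LinearMap.congr_fun hf x
    simp only [LinearMap.dualMap_apply, hx, map_smul, smul_eq_mul, LinearMap.zero_apply] at h ⊢
    exact (mul_eq_zero.1 h).resolve_left hc
  · intro g
    have key : ∀ y, ∃ z, ∀ x, φ x = c • y → g x = c * z := by
      intro y
      obtain ⟨x, hx⟩ := h1 y
      obtain ⟨x', hx'⟩ := h2 y
      have h3 : d • x = c • x' := hφ (by rw [map_smul, map_smul, hx, hx', smul_comm])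
      have h4 := congrArg g h3
      simp only [map_smul, smul_eq_mul] at h4
      obtain ⟨z, hz⟩ := hcd (g x) ⟨_, h4⟩
      refine ⟨z, fun x1 hx1 => ?_⟩
      rw [hφ (hx1.trans hx.symm), hz]
    choose F hF using key
    refine ⟨{ toFun := F, map_add' := ?_, map_smul' := ?_ }, ?_⟩
    · intro y y'
      obtain ⟨x, hx⟩ := h1 y
      obtain ⟨x', hx'⟩ := h1 y'
      have := hF (y + y') (x + x') (by rw [map_add, hx, hx', smul_add])
      rw [map_add, hF y x hx, hF y' x' hx', ← mul_add] at this
      exact (mul_left_cancel₀ hc this).symm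
    · intro r y
      obtain ⟨x, hx⟩ := h1 y
      have := hF (r • y) (r • x) (by rw [map_smul, hx, smul_comm])
      rw [map_smul, hF y x hx, smul_eq_mul, mul_left_comm] at this
      exact (mul_left_cancel₀ hc this).symm
    · ext x
      have := hF (φ x) (c • x) (by rw [map_smul])
      rw [map_smul, smul_eq_mul] at this
      exact (mul_left_cancel₀ hc this).symm

theorem stmt_core {R : Type*} [CommRing R] [IsDomain R] [IsNoetherianRing R] [IsLocalRing R]
    (hdim : ringKrullDim R = 2)
    (hreg : ∃ a b : R, Ideal.span {a, b} = IsLocalRing.maximalIdeal R)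
    {M : Type*} [AddCommGroup M] [Module R M] [Module.Finite R M] [Module.IsTorsionFree R M]
    (A : Submodule R M) [Module.IsTorsionFree R (M ⧸ A)]
    {N : Type*} [AddCommGroup N] [Module R N] [Module.Finite R N] [Module.IsTorsionFree R N]
    (π : Dual R (Dual R M) →ₗ[R] N) (hπ : Function.Surjective π)
    (hπA : ∀ m : M, π (Module.Dual.eval R M m) = 0 →
      ∃ r : R, r ≠ 0 ∧ r • Module.Dual.eval R M m ∈ A.map (Module.Dual.eval R M))
    (β : (M ⧸ A) →ₗ[R] N)
    (hβ : ∀ m : M, β (A.mkQ m) = π (Module.Dual.eval R M m))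
    (f₁ : evalCoker R ↥A →ₗ[R] evalCoker R M)
    (hf₁ : f₁ ∘ₗ (LinearMap.range (Module.Dual.eval R ↥A)).mkQ =
      (LinearMap.range (Module.Dual.eval R M)).mkQ ∘ₗ A.subtype.dualMap.dualMap)
    (f₂ : evalCoker R M →ₗ[R] evalCoker R (M ⧸ A))
    (hf₂ : f₂ ∘ₗ (LinearMap.range (Module.Dual.eval R M)).mkQ =
      (LinearMap.range (Module.Dual.eval R (M ⧸ A))).mkQ ∘ₗ A.mkQ.dualMap.dualMap)
    (f₃ : evalCoker R (M ⧸ A) →ₗ[R] evalCoker R N)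
    (hf₃ : f₃ ∘ₗ (LinearMap.range (Module.Dual.eval R (M ⧸ A))).mkQ =
      (LinearMap.range (Module.Dual.eval R N)).mkQ ∘ₗ β.dualMap.dualMap) :
    Function.Injective β ∧
    IsFiniteLength R (evalCoker R ↥A) ∧
    IsFiniteLength R (evalCoker R M) ∧
    IsFiniteLength R (evalCoker R (M ⧸ A)) ∧
    IsFiniteLength R (evalCoker R N) ∧
    Function.Injective f₁ ∧
    LinearMap.range f₁ = LinearMap.ker f₂ ∧
    LinearMap.range f₂ = LinearMap.ker f₃ ∧
    Function.Surjective f₃ := by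
  obtain ⟨a, b, hab⟩ := hreg
  obtain ⟨hap, hnab⟩ := aux_regular hdim hab
  have ham : a ∈ IsLocalRing.maximalIdeal R := by
    rw [← hab]; exact Ideal.subset_span (by simp)
  have hbm : b ∈ IsLocalRing.maximalIdeal R := by
    rw [← hab]; exact Ideal.subset_span (by simp)
  obtain ⟨injA, flA, nA, hA⟩ := aux_eval hab A
  obtain ⟨injM, flM, nM, hM⟩ := aux_eval hab M
  obtain ⟨injB, flB, -⟩ := aux_eval hab (M ⧸ A)
  obtain ⟨injN, flN, -⟩ := aux_eval hab N
  obtain ⟨c, hc⟩ : ∃ c, c = a ^ (nA + nM) := ⟨_, rfl⟩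
  obtain ⟨d, hd⟩ : ∃ d, d = b ^ (nA + nM) := ⟨_, rfl⟩
  have hc0 : c ≠ 0 := hc ▸ pow_ne_zero _ hap.ne_zero
  have hcd : ∀ x, c ∣ d * x → c ∣ x := by
    intro x hx
    rw [hc] at hx ⊢
    exact hap.pow_dvd_of_dvd_mul_left _ (fun h => hnab (hap.dvd_of_dvd_pow (hd ▸ h))) hx
  have hcA : ∀ ξ, ∃ x, Module.Dual.eval R A x = c • ξ := hc ▸ hA _ (by omega) a ham
  have hcM : ∀ ξ, ∃ x, Module.Dual.eval R M x = c • ξ := hc ▸ hM _ (by omega) a ham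
  have hdM : ∀ ξ, ∃ x, Module.Dual.eval R M x = d • ξ := hd ▸ hM _ (by omega) b hbm
  have satA : ∀ (r : R) (m : M), r ≠ 0 → r • m ∈ A → m ∈ A := by
    intro r m hr h
    rw [← Submodule.Quotient.mk_eq_zero, Submodule.Quotient.mk_smul] at h
    rw [← Submodule.Quotient.mk_eq_zero]
    exact (smul_eq_zero.1 h).resolve_left hr
  have injβ : Function.Injective β := by
    rw [← LinearMap.ker_eq_bot, LinearMap.ker_eq_bot']
    intro x hx
    obtain ⟨m, rfl⟩ := A.mkQ_surjective x
    rw [hβ] at hx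
    obtain ⟨r, hr, α, hα, he⟩ := hπA m hx
    rw [← map_smul] at he
    rw [Submodule.mkQ_apply, Submodule.Quotient.mk_eq_zero]
    exact satA r m hr (injM he ▸ hα)
  have hβd : Function.Bijective β.dualMap := by
    apply aux_dual hc0 hcd β injβ
    · intro y
      obtain ⟨ξ, rfl⟩ := hπ y
      obtain ⟨m, hm⟩ := hcM ξ
      exact ⟨A.mkQ m, by rw [hβ, hm, map_smul]⟩
    · intro y
      obtain ⟨ξ, rfl⟩ := hπ y
      obtain ⟨m, hm⟩ := hdM ξ
      exact ⟨A.mkQ m, by rw [hβ, hm, map_smul]⟩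
  have hβdd : Function.Bijective β.dualMap.dualMap := by
    exact (LinearEquiv.ofBijective _ hβd).dualMap.bijective
  have natA : ∀ x, A.subtype.dualMap.dualMap (Module.Dual.eval R A x) = Module.Dual.eval R M x :=
    fun x => rfl
  have natM : ∀ x, A.mkQ.dualMap.dualMap (Module.Dual.eval R M x) =
    Module.Dual.eval R (M ⧸ A) (A.mkQ x) := fun x => rfl
  have natB : ∀ x, β.dualMap.dualMap (Module.Dual.eval R (M ⧸ A) x) =
    Module.Dual.eval R N (β x) := fun x => rfl
  have e1 : ∀ ξ, f₁ (Submodule.mkQ _ ξ) = Submodule.mkQ _ (A.subtype.dualMap.dualMap ξ) :=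
    LinearMap.congr_fun hf₁
  have e2 : ∀ ξ, f₂ (Submodule.mkQ _ ξ) = Submodule.mkQ _ (A.mkQ.dualMap.dualMap ξ) :=
    LinearMap.congr_fun hf₂
  have e3 : ∀ ξ, f₃ (Submodule.mkQ _ ξ) = Submodule.mkQ _ (β.dualMap.dualMap ξ) :=
    LinearMap.congr_fun hf₃
  have hcomm : ∀ ξ, β.dualMap.dualMap (A.mkQ.dualMap.dualMap ξ) = Module.Dual.eval R N (π ξ) := by
    intro ξ
    obtain ⟨m, hm⟩ := hcM ξ
    apply smul_right_injective _ hc0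
    change c • _ = c • _
    rw [← map_smul, ← map_smul, ← map_smul, ← map_smul, ← hm, natM, natB, hβ]
  have injA2 : ∀ ξ, A.subtype.dualMap.dualMap ξ = 0 → ξ = 0 := by
    intro ξ h
    obtain ⟨x, hx⟩ := hcA ξ
    have h1 := natA x
    rw [hx, map_smul, h, smul_zero] at h1
    have h2 : (x : M) = 0 := injM (by rw [← h1, map_zero])
    have h3 : x = 0 := Subtype.ext h2
    rw [h3, map_zero] at hx
    exact (smul_eq_zero.1 hx.symm).resolve_left hc0
  have exM : ∀ ξ, A.mkQ.dualMap.dualMap ξ = 0 → ∃ η, A.subtype.dualMap.dualMap η = ξ := by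
    let K := LinearMap.ker A.mkQ.dualMap.dualMap
    let j : A →ₗ[R] K := (Module.Dual.eval R M ∘ₗ A.subtype).codRestrict K (by
      intro x
      rw [LinearMap.mem_ker, LinearMap.comp_apply, natM, Submodule.mkQ_apply,
        Submodule.subtype_apply, (Submodule.Quotient.mk_eq_zero A).2 x.2, map_zero])
    have hjv : ∀ x, (j x : Dual R (Dual R M)) = Module.Dual.eval R M x := fun x => rfl
    have hj : Function.Injective j := by
      intro x y hxy
      exact Subtype.ext (injM (congrArg Subtype.val hxy))
    have hlift : ∀ (r : R) (y : K) (m : M), Module.Dual.eval R M m = r • (y : Dual R (Dual R M)) →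
        ∃ x, j x = r • y := by
      intro r y m hm
      have h1 := natM m
      rw [hm, map_smul, LinearMap.mem_ker.1 y.2, smul_zero] at h1
      have h2 : A.mkQ m = 0 := injB (by rw [← h1, map_zero])
      rw [Submodule.mkQ_apply, Submodule.Quotient.mk_eq_zero] at h2
      exact ⟨⟨m, h2⟩, Subtype.ext hm⟩
    have hjd := aux_dual hc0 hcd j hj
      (fun y => (hcM y.1).elim fun m hm => hlift c y m hm)
      (fun y => (hdM y.1).elim fun m hm => hlift d y m hm)
    let e := LinearEquiv.ofBijective _ hjd
    intro ξ hξ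
    refine ⟨(Module.Dual.eval R K ⟨ξ, hξ⟩) ∘ₗ e.symm.toLinearMap, ?_⟩
    ext ψ
    let κ : Dual R K := (Module.Dual.eval R (Dual R M) ψ) ∘ₗ K.subtype
    have hκ : e κ = A.subtype.dualMap ψ := by
      ext x; rfl
    have hκ' : e.symm (A.subtype.dualMap ψ) = κ := by rw [← hκ, e.symm_apply_apply]
    rw [LinearMap.dualMap_apply, LinearMap.comp_apply]
    change Module.Dual.eval R K ⟨ξ, hξ⟩ (e.symm (A.subtype.dualMap ψ)) = _
    rw [hκ']
    rfl
  refine ⟨injβ, flA, flM, flB, flN, ?_, ?_, ?_, ?_⟩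
  · rw [← LinearMap.ker_eq_bot, LinearMap.ker_eq_bot']
    intro x hx
    obtain ⟨ξ, rfl⟩ := Submodule.mkQ_surjective _ x
    rw [e1, Submodule.mkQ_apply, Submodule.Quotient.mk_eq_zero] at hx
    obtain ⟨m, hm⟩ := hx
    obtain ⟨α, hα⟩ := hcA ξ
    have h1 := natA α
    rw [hα, map_smul, ← hm, ← map_smul] at h1
    have h2 : m ∈ A := satA c m hc0 (injM h1 ▸ α.2)
    rw [Submodule.mkQ_apply, Submodule.Quotient.mk_eq_zero]
    refine ⟨⟨m, h2⟩, ?_⟩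
    rw [← sub_eq_zero]
    apply injA2
    rw [map_sub, ← hm, natA, sub_self]
  · apply le_antisymm
    · rintro _ ⟨x, rfl⟩
      obtain ⟨ξ, rfl⟩ := Submodule.mkQ_surjective _ x
      rw [LinearMap.mem_ker, e1, e2]
      have : A.mkQ.dualMap.dualMap (A.subtype.dualMap.dualMap ξ) = 0 := by
        ext ψ
        have h0 : A.subtype.dualMap (A.mkQ.dualMap ψ) = 0 := by
          ext x
          rw [LinearMap.dualMap_apply, LinearMap.dualMap_apply, Submodule.mkQ_apply,
            Submodule.subtype_apply, (Submodule.Quotient.mk_eq_zero A).2 x.2, map_zero,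
            LinearMap.zero_apply]
        rw [LinearMap.dualMap_apply, LinearMap.dualMap_apply, h0, map_zero, LinearMap.zero_apply]
      rw [this, map_zero]
    · intro x hx
      obtain ⟨ξ, rfl⟩ := Submodule.mkQ_surjective _ x
      rw [LinearMap.mem_ker, e2, Submodule.mkQ_apply, Submodule.Quotient.mk_eq_zero] at hx
      obtain ⟨y, hy⟩ := hx
      obtain ⟨m, rfl⟩ := A.mkQ_surjective y
      obtain ⟨η, hη⟩ := exM (ξ - Module.Dual.eval R M m) (by rw [map_sub, ← hy, natM, sub_self])
      refine ⟨Submodule.mkQ _ η, ?_⟩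
      rw [e1, hη, map_sub, sub_eq_self, Submodule.mkQ_apply, Submodule.Quotient.mk_eq_zero]
      exact ⟨m, rfl⟩
  · apply le_antisymm
    · rintro _ ⟨x, rfl⟩
      obtain ⟨ξ, rfl⟩ := Submodule.mkQ_surjective _ x
      rw [LinearMap.mem_ker, e2, e3, hcomm, Submodule.mkQ_apply, Submodule.Quotient.mk_eq_zero]
      exact ⟨_, rfl⟩
    · intro x hx
      obtain ⟨ζ, rfl⟩ := Submodule.mkQ_surjective _ x
      rw [LinearMap.mem_ker, e3, Submodule.mkQ_apply, Submodule.Quotient.mk_eq_zero] at hx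
      obtain ⟨ν, hν⟩ := hx
      obtain ⟨ξ, rfl⟩ := hπ ν
      rw [← hcomm] at hν
      exact ⟨Submodule.mkQ _ ξ, by rw [e2, hβdd.1 hν]⟩
  · intro y
    obtain ⟨ζ, rfl⟩ := Submodule.mkQ_surjective _ y
    obtain ⟨ξ, rfl⟩ := hβdd.2 ζ
    exact ⟨Submodule.mkQ _ ξ, e3 ξ⟩

theorem stmt_2 {R : Type*} [CommRing R] [IsDomain R] [IsNoetherianRing R] [IsLocalRing R]
    -- `R` is a regular local ring of Krull dimension 2: the Krull dimension is 2 and the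
    -- maximal ideal is generated by 2 elements
    (hdim : ringKrullDim R = 2)
    (hreg : ∃ a b : R, Ideal.span {a, b} = IsLocalRing.maximalIdeal R)
    {M : Type*} [AddCommGroup M] [Module R M] [Module.Finite R M]
    -- `M` is torsion-free of rank 2
    (htfM : Submodule.torsion R M = ⊥)
    (hrkM : Module.finrank (FractionRing R) (LocalizedModule (nonZeroDivisors R) M) = 2)
    -- `A ⊆ M` is a submodule of rank 1
    (A : Submodule R M)
    (hrkA : Module.finrank (FractionRing R) (LocalizedModule (nonZeroDivisors R) ↥A) = 1)
    -- the quotient `B := M ⧸ A` is torsion-free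
    (htfB : Submodule.torsion R (M ⧸ A) = ⊥)
    -- `β : B → N` is the map induced by `ε_M : M → M^{∨∨}`, where `A` is regarded as a
    -- submodule of `M^{∨∨}` via `ε_M` and `N := (M^{∨∨}/A)/Tors(M^{∨∨}/A)`
    (β : (M ⧸ A) →ₗ[R]
      ((Dual R (Dual R M) ⧸ A.map (Module.Dual.eval R M)) ⧸
        Submodule.torsion R (Dual R (Dual R M) ⧸ A.map (Module.Dual.eval R M))))
    (hβ : β ∘ₗ A.mkQ =
      (Submodule.torsion R
          (Dual R (Dual R M) ⧸ A.map (Module.Dual.eval R M))).mkQ ∘ₗ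
        (A.map (Module.Dual.eval R M)).mkQ ∘ₗ Module.Dual.eval R M)
    -- `f₁ : A^{∨∨}/A → M^{∨∨}/M` is induced by the bidual of the inclusion `A → M`
    (f₁ : evalCoker R ↥A →ₗ[R] evalCoker R M)
    (hf₁ : f₁ ∘ₗ (LinearMap.range (Module.Dual.eval R ↥A)).mkQ =
      (LinearMap.range (Module.Dual.eval R M)).mkQ ∘ₗ A.subtype.dualMap.dualMap)
    -- `f₂ : M^{∨∨}/M → B^{∨∨}/B` is induced by the bidual of the projection `M → B`
    (f₂ : evalCoker R M →ₗ[R] evalCoker R (M ⧸ A))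
    (hf₂ : f₂ ∘ₗ (LinearMap.range (Module.Dual.eval R M)).mkQ =
      (LinearMap.range (Module.Dual.eval R (M ⧸ A))).mkQ ∘ₗ A.mkQ.dualMap.dualMap)
    -- `f₃ : B^{∨∨}/B → N^{∨∨}/N` is induced by the bidual of `β`
    (f₃ : evalCoker R (M ⧸ A) →ₗ[R]
      evalCoker R
        ((Dual R (Dual R M) ⧸ A.map (Module.Dual.eval R M)) ⧸
          Submodule.torsion R (Dual R (Dual R M) ⧸ A.map (Module.Dual.eval R M))))
    (hf₃ : f₃ ∘ₗ (LinearMap.range (Module.Dual.eval R (M ⧸ A))).mkQ =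
      (LinearMap.range (Module.Dual.eval R
          ((Dual R (Dual R M) ⧸ A.map (Module.Dual.eval R M)) ⧸
            Submodule.torsion R
              (Dual R (Dual R M) ⧸ A.map (Module.Dual.eval R M))))).mkQ ∘ₗ
        β.dualMap.dualMap) :
    -- conclusion: `β` is injective, the four cokernels have finite length, and
    -- `0 → A^{∨∨}/A → M^{∨∨}/M → B^{∨∨}/B → N^{∨∨}/N → 0` is exact
    Function.Injective β ∧
    IsFiniteLength R (evalCoker R ↥A) ∧
    IsFiniteLength R (evalCoker R M) ∧
    IsFiniteLength R (evalCoker R (M ⧸ A)) ∧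
    IsFiniteLength R (evalCoker R
      ((Dual R (Dual R M) ⧸ A.map (Module.Dual.eval R M)) ⧸
        Submodule.torsion R (Dual R (Dual R M) ⧸ A.map (Module.Dual.eval R M)))) ∧
    Function.Injective f₁ ∧
    LinearMap.range f₁ = LinearMap.ker f₂ ∧
    LinearMap.range f₂ = LinearMap.ker f₃ ∧
    Function.Surjective f₃ := by
  have i1 : Module.IsTorsionFree R M := Submodule.isTorsionFree_iff_torsion_eq_bot.2 htfM
  have i2 : Module.IsTorsionFree R (M ⧸ A) := Submodule.isTorsionFree_iff_torsion_eq_bot.2 htfB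
  refine stmt_core hdim hreg A
    ((Submodule.torsion R (Dual R (Dual R M) ⧸ A.map (Module.Dual.eval R M))).mkQ ∘ₗ
        (A.map (Module.Dual.eval R M)).mkQ) ?_ ?_ β ?_ f₁ hf₁ f₂ hf₂ f₃ hf₃
  · exact (Submodule.mkQ_surjective _).comp (Submodule.mkQ_surjective _)
  · intro m hm
    rw [LinearMap.comp_apply, Submodule.mkQ_apply, Submodule.Quotient.mk_eq_zero,
      Submodule.mem_torsion_iff] at hm
    obtain ⟨r, hr⟩ := hm
    refine ⟨r, nonZeroDivisors.ne_zero r.2, ?_⟩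
    rw [← Submodule.Quotient.mk_eq_zero]
    exact hr
  · exact fun m => LinearMap.congr_fun hβ m
end

section
/- Let R be a regular local ring of Krull dimension 2, let M be a finitely generated torsion-free R-module of rank 2, and let A ⊆ M be a submodule of rank 1 such that B := M/A is torsion-free. Regard A as a submodule of M^{∨∨} via the evaluation map ε_M and set N := (M^{∨∨}/A)/Tors(M^{∨∨}/A). Then the R-modules A^{∨∨}/A, M^{∨∨}/M, B^{∨∨}/B and N^{∨∨}/N all have finite length, and length(A^{∨∨}/A) + length(B^{∨∨}/B) = length(M^{∨∨}/M) + length(N^{∨∨}/N). -/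
/-!
Statement 3 (local length identity behind Corollary 3.2(1) of the paper): over a regular local
ring of Krull dimension 2, for a rank 2 finitely generated torsion-free module `M` and a rank 1
submodule `A ⊆ M` with torsion-free quotient `B = M ⧸ A`, setting
`N := (M^{∨∨}/A)/Tors(M^{∨∨}/A)`, the modules `A^{∨∨}/A`, `M^{∨∨}/M`, `B^{∨∨}/B`, `N^{∨∨}/N`
have finite length and
`length(A^{∨∨}/A) + length(B^{∨∨}/B) = length(M^{∨∨}/M) + length(N^{∨∨}/N)`.
-/

open Module LinearMap

/-- The `R`-module `P` has length `m`, i.e. it admits a composition series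
`⊥ = P₀ ⋖ P₁ ⋖ ⋯ ⋖ P_m = ⊤` of length `m`. -/
def HasLength (R : Type*) [CommRing R] (P : Type*) [AddCommGroup P] [Module R P]
    (m : ℕ) : Prop :=
  ∃ s : CompositionSeries (Submodule R P), s.head = ⊥ ∧ s.last = ⊤ ∧ s.length = m

theorem aux_domain {S : Type*} [CommRing S] [IsNoetherianRing S] [IsLocalRing S] (t : S)
    (ht : IsLocalRing.maximalIdeal S = Ideal.span {t}) (hn : ¬ IsNilpotent t) : IsDomain S := by
  have key : ∀ x : S, x ≠ 0 → ∃ (n : ℕ) (u : S), IsUnit u ∧ x = t ^ n * u := by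
    intro x hx
    have h1 : ∃ n : ℕ, ¬ t ^ n ∣ x := by
      by_contra! h
      apply hx
      have := Ideal.iInf_pow_eq_bot_of_isLocalRing (IsLocalRing.maximalIdeal S)
        Ideal.IsPrime.ne_top'
      rw [← Ideal.mem_bot, ← this, Ideal.mem_iInf]
      intro i
      rw [ht, Ideal.span_singleton_pow, Ideal.mem_span_singleton]
      exact h i
    classical
    obtain ⟨n, hn1, hn2⟩ : ∃ n : ℕ, t ^ n ∣ x ∧ ¬ t ^ (n+1) ∣ x := by
      have h0 : Nat.find h1 ≠ 0 := by
        intro h0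
        have := Nat.find_spec h1
        rw [h0] at this
        simp at this
      obtain ⟨k, hk⟩ := Nat.exists_eq_succ_of_ne_zero h0
      refine ⟨k, ?_, ?_⟩
      · have := Nat.find_min h1 (m := k) (by omega)
        simpa using this
      · have := Nat.find_spec h1
        rwa [hk] at this
    obtain ⟨u, rfl⟩ := hn1
    refine ⟨n, u, ?_, rfl⟩
    by_contra hu
    have : u ∈ IsLocalRing.maximalIdeal S := hu
    rw [ht, Ideal.mem_span_singleton] at this
    exact hn2 (by rw [pow_succ]; exact mul_dvd_mul_left _ this)
  have : NoZeroDivisors S := ⟨by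
    intro x y hxy
    by_contra! h
    obtain ⟨n, u, hu, rfl⟩ := key x h.1
    obtain ⟨m, v, hv, rfl⟩ := key y h.2
    apply hn
    refine ⟨n + m, ?_⟩
    have : t ^ (n+m) * (u * v) = 0 := by rw [← hxy]; ring
    exact (hu.mul hv).mul_left_eq_zero.mp this⟩
  exact NoZeroDivisors.to_isDomain S

/-- all we need about the ring -/
structure GoodRing (R : Type*) [CommRing R] [IsLocalRing R] (a b : R) : Prop where
  prime : Prime a
  ndvd : ¬ a ∣ b
  ha : a ∈ IsLocalRing.maximalIdeal R
  hb : b ∈ IsLocalRing.maximalIdeal R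
  principal : ∀ P : Ideal R, P.IsPrime → P ≠ IsLocalRing.maximalIdeal R → ∃ x, P = Ideal.span {x}

theorem goodRing {R : Type*} [CommRing R] [IsDomain R] [IsNoetherianRing R] [IsLocalRing R]
    (hdim : ringKrullDim R = 2) (a b : R)
    (hab : Ideal.span {a, b} = IsLocalRing.maximalIdeal R) : GoodRing R a b := by
  have ha : a ∈ IsLocalRing.maximalIdeal R := by rw [← hab]; exact Ideal.subset_span (by simp)
  have hb : b ∈ IsLocalRing.maximalIdeal R := by rw [← hab]; exact Ideal.subset_span (by simp)
  have hle : ∀ P : Ideal R, a ∈ P → b ∈ P → IsLocalRing.maximalIdeal R ≤ P := by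
    intro P h1 h2
    rw [← hab, Ideal.span_le]
    rintro x (rfl | rfl) <;> assumption
  have hht : (IsLocalRing.maximalIdeal R).height = 2 := by
    have := IsLocalRing.maximalIdeal_height_eq_ringKrullDim (R := R)
    rw [hdim] at this
    exact WithBot.coe_injective this
  have hb' : ∀ n : ℕ, ¬ a ∣ b ^ n := by
    intro n hn
    have : IsLocalRing.maximalIdeal R ∈ (Ideal.span {a}).minimalPrimes := by
      refine ⟨⟨inferInstance, by simpa [Ideal.span_le] using ha⟩, ?_⟩
      rintro P ⟨hP, hP2⟩ -
      have haP : a ∈ P := hP2 (Ideal.mem_span_singleton_self a)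
      exact hle P haP (hP.mem_of_pow_mem n (P.mem_of_dvd hn haP))
    have := Ideal.height_le_one_of_isPrincipal_of_mem_minimalPrimes _ _ this
    rw [hht] at this
    exact absurd this (by decide)
  have hane : a ≠ 0 := by
    rintro rfl
    have : IsLocalRing.maximalIdeal R ∈ (Ideal.span {b}).minimalPrimes := by
      refine ⟨⟨inferInstance, by simpa [Ideal.span_le] using hb⟩, ?_⟩
      rintro P ⟨hP, hP2⟩ -
      exact hle P P.zero_mem (hP2 (Ideal.mem_span_singleton_self b))
    have := Ideal.height_le_one_of_isPrincipal_of_mem_minimalPrimes _ _ this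
    rw [hht] at this
    exact absurd this (by decide)
  have hne : Ideal.span {a} ≠ ⊤ := by
    intro h
    rw [Ideal.span_singleton_eq_top] at h
    exact ha h
  have : Nontrivial (R ⧸ Ideal.span {a}) := Ideal.Quotient.nontrivial_iff.mpr hne
  have : IsLocalRing (R ⧸ Ideal.span {a}) :=
    IsLocalRing.of_surjective' (Ideal.Quotient.mk _) Ideal.Quotient.mk_surjective
  have hmax : IsLocalRing.maximalIdeal (R ⧸ Ideal.span {a}) =
      Ideal.span {Ideal.Quotient.mk (Ideal.span {a}) b} := by
    have h1 : (IsLocalRing.maximalIdeal R).map (Ideal.Quotient.mk (Ideal.span {a})) =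
      Ideal.span {Ideal.Quotient.mk (Ideal.span {a}) b} := by
      rw [← hab, Ideal.map_span, Set.image_pair, Ideal.span_insert,
        Ideal.Quotient.eq_zero_iff_mem.mpr (Ideal.mem_span_singleton_self a)]
      simp
    rw [← h1]
    symm
    apply IsLocalRing.eq_maximalIdeal
    rcases Ideal.map_eq_top_or_isMaximal_of_surjective (Ideal.Quotient.mk (Ideal.span {a}))
      Ideal.Quotient.mk_surjective (IsLocalRing.maximalIdeal.isMaximal R) with h | h
    · exfalso
      have := congrArg (Ideal.comap (Ideal.Quotient.mk (Ideal.span {a}))) h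
      rw [Ideal.comap_map_of_surjective _ Ideal.Quotient.mk_surjective, Ideal.comap_top,
        ← RingHom.ker_eq_comap_bot, Ideal.mk_ker, sup_eq_left.mpr] at this
      · exact Ideal.IsPrime.ne_top' this
      · simpa [Ideal.span_le] using ha
    · exact h
  have hdom : IsDomain (R ⧸ Ideal.span {a}) := by
    apply aux_domain _ hmax
    rintro ⟨n, hn⟩
    rw [← map_pow, Ideal.Quotient.eq_zero_iff_mem, Ideal.mem_span_singleton] at hn
    exact hb' n hn
  have : IsPrincipalIdealRing (R ⧸ Ideal.span {a}) :=
    ((tfae_of_isNoetherianRing_of_isLocalRing_of_isDomain (R ⧸ Ideal.span {a})).out 4 0).mp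
      (⟨⟨_, hmax⟩⟩ : (IsLocalRing.maximalIdeal (R ⧸ Ideal.span {a})).IsPrincipal)
  refine ⟨?_, by simpa using hb' 1, ha, hb, ?_⟩
  · rw [← Ideal.span_singleton_prime hane]
    exact (Ideal.Quotient.isDomain_iff_prime _).mp hdom
  · intro P hP hPm
    by_cases haP : a ∈ P
    · refine ⟨a, ?_⟩
      have hker : RingHom.ker (Ideal.Quotient.mk (Ideal.span {a})) ≤ P := by
        simpa [Ideal.mk_ker, Ideal.span_le] using haP
      have := Ideal.map_isPrime_of_surjective (f := Ideal.Quotient.mk (Ideal.span {a}))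
        Ideal.Quotient.mk_surjective hker
      have hc : (P.map (Ideal.Quotient.mk (Ideal.span {a}))).comap
          (Ideal.Quotient.mk (Ideal.span {a})) = P := by
        rw [Ideal.comap_map_of_surjective _ Ideal.Quotient.mk_surjective,
          ← RingHom.ker_eq_comap_bot, sup_eq_left.mpr hker]
      by_cases h0 : P.map (Ideal.Quotient.mk (Ideal.span {a})) = ⊥
      · rw [← hc, h0, ← RingHom.ker_eq_comap_bot, Ideal.mk_ker]
      · exfalso
        have h1 := IsLocalRing.eq_maximalIdeal (this.isMaximal h0)
        apply hPm
        refine le_antisymm (IsLocalRing.le_maximalIdeal hP.ne_top) (hle P haP ?_)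
        rw [← hc, h1, Ideal.mem_comap, hmax]
        exact Ideal.mem_span_singleton_self _
    · have hpr : (P.map (Ideal.Quotient.mk (Ideal.span {a}))).IsPrincipal := inferInstance
      obtain ⟨y, hy⟩ := hpr
      have hyP : y ∈ P.map (Ideal.Quotient.mk (Ideal.span {a})) := by
        rw [hy]; exact Submodule.mem_span_singleton_self y
      obtain ⟨x, hx, rfl⟩ := (Ideal.mem_map_iff_of_surjective _ Ideal.Quotient.mk_surjective).mp hyP
      refine ⟨x, le_antisymm ?_ ((Ideal.span_singleton_le_iff_mem _).mpr hx)⟩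
      apply Submodule.le_of_le_smul_of_le_jacobson_bot (I := Ideal.span {a})
        (IsNoetherian.noetherian P)
      · rw [IsLocalRing.jacobson_eq_maximalIdeal _ bot_ne_top]
        simpa [Ideal.span_le] using ha
      · intro p hp
        have h1 := Ideal.mem_map_of_mem (Ideal.Quotient.mk (Ideal.span {a})) hp
        rw [hy] at h1
        obtain ⟨s, hs⟩ := Ideal.mem_span_singleton'.mp h1
        obtain ⟨r, rfl⟩ := Ideal.Quotient.mk_surjective s
        rw [← map_mul, Eq.comm, Ideal.Quotient.eq, Ideal.mem_span_singleton] at hs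
        obtain ⟨c, hc⟩ := hs
        have hcP : c ∈ P := by
          have : a * c ∈ P := by
            rw [← hc]; exact P.sub_mem hp (P.mul_mem_left _ hx)
          exact (hP.mem_or_mem this).resolve_left haP
        rw [Submodule.mem_sup]
        refine ⟨r * x, Ideal.mem_span_singleton'.mpr ⟨r, rfl⟩, a * c,
          Ideal.mul_mem_mul (Ideal.mem_span_singleton_self a) hcP, by rw [← hc]; ring⟩

theorem factor_at_prime {R : Type*} [CommRing R] [IsDomain R] [IsNoetherianRing R]
    (P : Type*) [AddCommGroup P] [Module R P] [Module.Finite R P] [IsTorsionFree R P]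
    (p : Ideal R) [hp : p.IsPrime] (hx : ∃ x, p = Ideal.span {x}) :
    ∃ (s : R) (n : ℕ) (φ : (Fin n → R) →ₗ[R] P) (ψ : P →ₗ[R] (Fin n → R)),
      s ∉ p ∧ ∀ y, φ (ψ y) = s • y := by
  have : FinitePresentation R P := Module.finitePresentation_of_finite R P
  have hpid : IsPrincipalIdealRing (Localization.AtPrime p) := by
    refine ((tfae_of_isNoetherianRing_of_isLocalRing_of_isDomain
      (Localization.AtPrime p)).out 4 0).mp ?_
    obtain ⟨x, hx⟩ := hx
    rw [← Localization.AtPrime.map_eq_maximalIdeal]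
    refine ⟨⟨algebraMap _ _ x, ?_⟩⟩
    have h3 : ∀ q : Ideal R, q = Ideal.span {x} → q.map (algebraMap R (Localization.AtPrime p)) =
        Ideal.span {algebraMap R (Localization.AtPrime p) x} := by
      rintro q rfl
      rw [Ideal.map_span, Set.image_singleton]
    exact h3 p hx
  have hS : p.primeCompl ≤ nonZeroDivisors R := p.primeCompl_le_nonZeroDivisors
  have htf : IsTorsionFree (Localization.AtPrime p) (LocalizedModule p.primeCompl P) :=
    inferInstance
  have hfree : Module.Free (Localization.AtPrime p) (LocalizedModule p.primeCompl P) :=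
    inferInstance
  let bs := Module.finBasis (Localization.AtPrime p) (LocalizedModule p.primeCompl P)
  set n := Module.finrank (Localization.AtPrime p) (LocalizedModule p.primeCompl P)
  let ℓ := LocalizedModule.mkLinearMap p.primeCompl P
  let g : (Fin n → R) →ₗ[R] (Fin n → Localization.AtPrime p) :=
    LinearMap.pi fun i => (Algebra.linearMap R (Localization.AtPrime p)) ∘ₗ LinearMap.proj i
  have hg : IsLocalizedModule p.primeCompl g := inferInstance
  let e : LocalizedModule p.primeCompl P ≃ₗ[R] (Fin n → Localization.AtPrime p) :=
    bs.equivFun.restrictScalars R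
  obtain ⟨ψ, s, hψ⟩ := Module.FinitePresentation.exists_lift_of_isLocalizedModule
    p.primeCompl g (e.toLinearMap ∘ₗ ℓ)
  obtain ⟨φ, t, hφ⟩ := Module.FinitePresentation.exists_lift_of_isLocalizedModule
    p.primeCompl ℓ (e.symm.toLinearMap ∘ₗ g)
  have hinj : Function.Injective ℓ := by
    rw [← LinearMap.ker_eq_bot, eq_bot_iff]
    intro y hy
    obtain ⟨c, hc⟩ := (IsLocalizedModule.eq_zero_iff p.primeCompl ℓ).mp hy
    have hc' : (c : R) • y = 0 := hc
    exact (smul_eq_zero.mp hc').resolve_left (nonZeroDivisors.ne_zero (hS c.2))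
  refine ⟨t * s, n, φ, ψ, (t * s).2, fun y => hinj ?_⟩
  have h1 := LinearMap.congr_fun hφ (ψ y)
  have h2 := LinearMap.congr_fun hψ y
  simp only [LinearMap.comp_apply, LinearMap.smul_apply] at h1 h2
  rw [h1, h2]
  simp [Submonoid.smul_def, mul_smul]

theorem eval_inj {R : Type*} [CommRing R] [IsDomain R] [IsNoetherianRing R]
    (P : Type*) [AddCommGroup P] [Module R P] [Module.Finite R P] [IsTorsionFree R P] :
    Function.Injective (Dual.eval R P) := by
  obtain ⟨s, n, φ, ψ, hs, h⟩ := factor_at_prime P (⊥ : Ideal R) ⟨0, by simp⟩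
  rw [← LinearMap.ker_eq_bot, eq_bot_iff]
  intro y hy
  have h0 : ψ y = 0 := by
    ext i
    exact LinearMap.congr_fun hy (LinearMap.proj i ∘ₗ ψ)
  have h1 := h y
  rw [h0, map_zero] at h1
  exact (smul_eq_zero.mp h1.symm).resolve_left (by simpa using hs)

theorem exists_ann {R : Type*} [CommRing R] [IsDomain R] [IsNoetherianRing R]
    (P : Type*) [AddCommGroup P] [Module R P] [Module.Finite R P] [IsTorsionFree R P]
    (p : Ideal R) [hp : p.IsPrime] (hx : ∃ x, p = Ideal.span {x}) :
    ∃ s ∉ p, s ∈ Module.annihilator R (evalCoker R P) := by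
  obtain ⟨s, n, φ, ψ, hs, h⟩ := factor_at_prime P p hx
  refine ⟨s, hs, ?_⟩
  rw [Module.mem_annihilator]
  intro z
  obtain ⟨z, rfl⟩ := Submodule.mkQ_surjective _ z
  rw [← map_smul, Submodule.mkQ_apply, Submodule.Quotient.mk_eq_zero]
  obtain ⟨w, hw⟩ := (bijective_dual_eval R (Fin n → R)).2 (ψ.dualMap.dualMap z)
  refine ⟨φ w, ?_⟩
  ext f
  have h1 := LinearMap.congr_fun hw (φ.dualMap f)
  simp only [Dual.eval_apply, LinearMap.dualMap_apply, LinearMap.smul_apply] at h1 ⊢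
  rw [h1, ← LinearMap.map_smul]
  congr 1
  ext y
  simp [h]

theorem fact1 {R : Type*} [CommRing R] [IsDomain R] [IsNoetherianRing R] [IsLocalRing R]
    {a b : R} (G : GoodRing R a b)
    (P : Type*) [AddCommGroup P] [Module R P] [Module.Finite R P] [IsTorsionFree R P] :
    IsFiniteLength R (evalCoker R P) ∧ ∃ n : ℕ, ∀ z : Dual R (Dual R P),
      a ^ n • z ∈ LinearMap.range (Dual.eval R P) ∧ b ^ n • z ∈ LinearMap.range (Dual.eval R P) := by
  have hfin : Module.Finite R (Dual R (Dual R P)) := inferInstance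
  set I := Module.annihilator R (evalCoker R P) with hI
  have hpr : ∀ p : Ideal R, p.IsPrime → I ≤ p → p = IsLocalRing.maximalIdeal R := by
    intro p hp hIp
    by_contra hne
    obtain ⟨s, hs, hs2⟩ := exists_ann P p (G.principal p hp hne)
    exact hs (hIp hs2)
  constructor
  · rw [isFiniteLength_iff_isNoetherian_isArtinian]
    refine ⟨inferInstance, ?_⟩
    have hart : IsArtinianRing (R ⧸ I) := by
      rw [isArtinianRing_iff_krullDimLE_zero, Ring.krullDimLE_zero_iff]
      intro J hJ
      have h1 : J.comap (Ideal.Quotient.mk I) = IsLocalRing.maximalIdeal R :=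
        hpr _ inferInstance (by
          conv_lhs => rw [← Ideal.mk_ker (I := I), RingHom.ker_eq_comap_bot]
          exact Ideal.comap_mono bot_le)
      have h2 : (J.comap (Ideal.Quotient.mk I)).IsMaximal := by rw [h1]; infer_instance
      rcases Ideal.map_eq_top_or_isMaximal_of_surjective (Ideal.Quotient.mk I)
        Ideal.Quotient.mk_surjective h2 with h3 | h3
      · rw [Ideal.map_comap_of_surjective _ Ideal.Quotient.mk_surjective] at h3
        exact absurd h3 hJ.ne_top
      · rwa [Ideal.map_comap_of_surjective _ Ideal.Quotient.mk_surjective] at h3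
    let : Module (R ⧸ I) (evalCoker R P) := Module.quotientAnnihilator
    have : IsScalarTower R (R ⧸ I) (evalCoker R P) := inferInstance
    have : Module.Finite (R ⧸ I) (evalCoker R P) := Module.Finite.of_restrictScalars_finite R _ _
    have : IsArtinian (R ⧸ I) (evalCoker R P) := inferInstance
    exact isArtinian_of_surjective_algebraMap (R := R ⧸ I) Ideal.Quotient.mk_surjective
  · have hr : IsLocalRing.maximalIdeal R ≤ I.radical := by
      rw [Ideal.radical_eq_sInf]
      refine le_sInf ?_
      rintro p ⟨h1, h2⟩
      exact (hpr p h2 h1).ge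
    obtain ⟨n, hn⟩ := Ideal.exists_pow_le_of_le_radical_of_fg hr (IsNoetherian.noetherian _)
    have key : ∀ c ∈ IsLocalRing.maximalIdeal R, ∀ z : Dual R (Dual R P),
        c ^ n • z ∈ LinearMap.range (Dual.eval R P) := by
      intro c hc z
      have := Module.mem_annihilator.mp (hn (Ideal.pow_mem_pow hc n)) (Submodule.mkQ _ z)
      rwa [← map_smul, Submodule.mkQ_apply, Submodule.Quotient.mk_eq_zero] at this
    exact ⟨n, fun z => ⟨key a G.ha z, key b G.hb z⟩⟩

theorem dual_bij {R : Type*} [CommRing R] [IsDomain R] [IsLocalRing R]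
    {a b : R} (G : GoodRing R a b)
    {P Q : Type*} [AddCommGroup P] [Module R P] [AddCommGroup Q] [Module R Q]
    (f : P →ₗ[R] Q) (hf : Function.Injective f) (n : ℕ)
    (h : ∀ q, a ^ n • q ∈ LinearMap.range f ∧ b ^ n • q ∈ LinearMap.range f) :
    Function.Bijective f.dualMap := by
  have han : a ^ n ≠ 0 := pow_ne_zero _ G.prime.ne_zero
  constructor
  · rw [← LinearMap.ker_eq_bot, eq_bot_iff]
    intro g hg
    ext q
    obtain ⟨x, hx⟩ := (h q).1
    have h1 := LinearMap.congr_fun hg x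
    rw [LinearMap.dualMap_apply, hx, map_smul] at h1
    exact (mul_eq_zero.mp h1).resolve_left han
  · intro k
    have key : ∀ q : Q, ∃ r : R, ∀ x, f x = a ^ n • q → k x = a ^ n * r := by
      intro q
      obtain ⟨x, hx⟩ := (h q).1
      obtain ⟨y, hy⟩ := (h q).2
      have h1 : b ^ n • x = a ^ n • y := hf (by
        rw [map_smul, map_smul, hx, hy, smul_comm])
      have h2 : b ^ n * k x = a ^ n * k y := by
        simpa using congrArg k h1
      have h3 : a ^ n ∣ k x :=
        G.prime.pow_dvd_of_dvd_mul_left n (fun hd => G.ndvd (G.prime.dvd_of_dvd_pow hd))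
          (Dvd.intro _ h2.symm)
      obtain ⟨r, hr⟩ := h3
      refine ⟨r, fun x' hx' => ?_⟩
      rw [hf (hx'.trans hx.symm), hr]
    choose r hr using key
    choose x hx using fun q => (h q).1
    have hrx : ∀ q, k (x q) = a ^ n * r q := fun q => hr q _ (hx q)
    refine ⟨{ toFun := r, map_add' := ?_, map_smul' := ?_ }, ?_⟩
    · intro q q'
      apply mul_left_cancel₀ han
      rw [← hr (q + q') (x q + x q') (by rw [map_add, hx, hx, smul_add]), map_add, hrx, hrx,
        mul_add]
    · intro c q
      apply mul_left_cancel₀ han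
      rw [← hr (c • q) (c • x q) (by rw [map_smul, hx, smul_comm]), map_smul, hrx]
      simp only [smul_eq_mul, RingHom.id_apply]
      ring
    · ext y
      apply mul_left_cancel₀ han
      simp only [LinearMap.dualMap_apply, LinearMap.coe_mk, AddHom.coe_mk]
      rw [← hr (f y) (a ^ n • y) (by rw [map_smul]), map_smul, smul_eq_mul]

theorem ddual_refl {R : Type*} [CommRing R] [IsDomain R] [IsNoetherianRing R] [IsLocalRing R]
    {a b : R} (G : GoodRing R a b)
    (P : Type*) [AddCommGroup P] [Module R P] [Module.Finite R P] [IsTorsionFree R P] :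
    IsReflexive R (Dual R (Dual R P)) := by
  have hd : IsReflexive R (Dual R P) := by
    obtain ⟨n, hn⟩ := (fact1 G P).2
    have hb := dual_bij G (Dual.eval R P) (eval_inj P) n hn
    have hl : ∀ x : Dual R P, (Dual.eval R P).dualMap (Dual.eval R (Dual R P) x) = x := by
      intro x; ext; rfl
    constructor
    constructor
    · exact Function.LeftInverse.injective hl
    · intro z
      exact ⟨(Dual.eval R P).dualMap z, hb.1 (hl _)⟩
  infer_instance

theorem coker_equiv {R : Type*} [CommRing R] [IsDomain R] [IsLocalRing R]
    {a b : R} (G : GoodRing R a b)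
    {P Q : Type*} [AddCommGroup P] [Module R P] [AddCommGroup Q] [Module R Q] [IsReflexive R Q]
    (f : P →ₗ[R] Q) (hf : Function.Injective f) (n : ℕ)
    (h : ∀ q, a ^ n • q ∈ LinearMap.range f ∧ b ^ n • q ∈ LinearMap.range f) :
    Nonempty (evalCoker R P ≃ₗ[R] Q ⧸ LinearMap.range f) := by
  have hb := dual_bij G f hf n h
  let e1 : Dual R Q ≃ₗ[R] Dual R P := LinearEquiv.ofBijective _ hb
  let e : Dual R (Dual R P) ≃ₗ[R] Q := e1.dualMap ≪≫ₗ (evalEquiv R Q).symm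
  refine ⟨Submodule.Quotient.equiv _ _ e ?_⟩
  have : ∀ p, e (Dual.eval R P p) = f p := by
    intro p
    rw [LinearEquiv.trans_apply, LinearEquiv.symm_apply_eq]
    ext g
    rfl
  ext q
  constructor
  · rintro ⟨_, ⟨p, rfl⟩, rfl⟩
    exact ⟨p, (this p).symm⟩
  · rintro ⟨p, rfl⟩
    exact ⟨_, ⟨p, rfl⟩, this p⟩

theorem sat_refl {R : Type*} [CommRing R] [IsDomain R] [IsNoetherianRing R] [IsLocalRing R]
    {a b : R} (G : GoodRing R a b)
    (V : Type*) [AddCommGroup V] [Module R V] [Module.Finite R V] [IsReflexive R V]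
    (A : Submodule R V) (hA : ∀ (r : R) (v : V), r ≠ 0 → r • v ∈ A → v ∈ A) :
    IsReflexive R A := by
  constructor
  refine ⟨eval_inj A, fun z => ?_⟩
  obtain ⟨n, hn⟩ := (fact1 G A).2
  have han : a ^ n ≠ 0 := pow_ne_zero _ G.prime.ne_zero
  obtain ⟨w, hw⟩ := (hn z).1
  obtain ⟨v, hv⟩ := (bijective_dual_eval R V).2 (A.subtype.dualMap.dualMap z)
  have h1 : a ^ n • v = w := by
    apply (bijective_dual_eval R V).1
    rw [map_smul, hv, ← map_smul, ← hw]
    rfl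
  refine ⟨⟨v, hA _ v han (h1 ▸ w.2)⟩, ?_⟩
  have h2 : a ^ n • Dual.eval R A ⟨v, hA _ v han (h1 ▸ w.2)⟩ = a ^ n • z := by
    rw [← hw, ← map_smul]
    congr 1
    exact Subtype.ext h1
  exact smul_right_injective _ han h2

theorem length_comp {R : Type*} [CommRing R]
    {P Q S : Type*} [AddCommGroup P] [Module R P] [AddCommGroup Q] [Module R Q]
    [AddCommGroup S] [Module R S]
    (f : P →ₗ[R] Q) (g : Q →ₗ[R] S) (hg : Function.Injective g) :
    Module.length R (S ⧸ LinearMap.range (g ∘ₗ f)) =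
      Module.length R (Q ⧸ LinearMap.range f) + Module.length R (S ⧸ LinearMap.range g) := by
  have h1 : LinearMap.range f ≤ (LinearMap.range (g ∘ₗ f)).comap g := by
    rintro _ ⟨x, rfl⟩; exact ⟨x, rfl⟩
  have h2 : LinearMap.range (g ∘ₗ f) ≤ LinearMap.range g := LinearMap.range_comp_le_range f g
  refine Module.length_eq_add_of_exact (Submodule.mapQ _ _ g h1) (Submodule.factor h2) ?_
    (Submodule.factor_surjective h2) ?_
  · rw [← LinearMap.ker_eq_bot, eq_bot_iff]
    intro x hx
    obtain ⟨x, rfl⟩ := Submodule.mkQ_surjective _ x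
    have : g x ∈ LinearMap.range (g ∘ₗ f) := by simpa using hx
    obtain ⟨y, hy⟩ := this
    have hy' := hg hy
    simp [← hy']
  · intro x
    obtain ⟨x, rfl⟩ := Submodule.mkQ_surjective _ x
    constructor
    · intro hx
      have : x ∈ LinearMap.range g := by simpa using hx
      obtain ⟨y, rfl⟩ := this
      exact ⟨Submodule.mkQ _ y, rfl⟩
    · rintro ⟨y, hy⟩
      obtain ⟨y, rfl⟩ := Submodule.mkQ_surjective _ y
      rw [← hy]
      simp

theorem hasLength_of {R : Type*} [CommRing R] {P : Type*} [AddCommGroup P] [Module R P]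
    (h : IsFiniteLength R P) : ∃ n : ℕ, HasLength R P n ∧ Module.length R P = n := by
  obtain ⟨s, h1, h2⟩ := isFiniteLength_iff_exists_compositionSeries.mp h
  exact ⟨s.length, ⟨s, h1, h2, rfl⟩, (Module.length_compositionSeries s h1 h2).symm⟩

theorem core {R : Type*} [CommRing R] [IsDomain R] [IsNoetherianRing R] [IsLocalRing R]
    {a b : R} (G : GoodRing R a b)
    {M V : Type*} [AddCommGroup M] [Module R M] [Module.Finite R M] [IsTorsionFree R M]
    [AddCommGroup V] [Module R V] [Module.Finite R V] [IsReflexive R V]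
    (ev : M →ₗ[R] V) (hinj : Function.Injective ev) (n : ℕ)
    (hn : ∀ v, a ^ n • v ∈ LinearMap.range ev ∧ b ^ n • v ∈ LinearMap.range ev)
    (A : Submodule R M) [IsTorsionFree R (M ⧸ A)] :
    Module.length R (evalCoker R A) + Module.length R (evalCoker R (M ⧸ A)) =
      Module.length R (V ⧸ LinearMap.range ev) +
      Module.length R (evalCoker R ((V ⧸ A.map ev) ⧸ Submodule.torsion R (V ⧸ A.map ev))) := by
  set A0 : Submodule R V := A.map ev with hA0
  set T : Submodule R (V ⧸ A0) := Submodule.torsion R (V ⧸ A0) with hT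
  have hN : IsTorsionFree R ((V ⧸ A0) ⧸ T) := Submodule.QuotientTorsion.instIsTorsionFree
  have hNf : Module.Finite R ((V ⧸ A0) ⧸ T) := inferInstance
  let A' : Submodule R V := T.comap A0.mkQ
  have hmem : ∀ v : V, v ∈ A' ↔ ∃ r : R, r ≠ 0 ∧ r • v ∈ A0 := by
    intro v
    change A0.mkQ v ∈ T ↔ _
    rw [hT, Submodule.mem_torsion_iff]
    constructor
    · rintro ⟨r, hr⟩
      refine ⟨r, nonZeroDivisors.ne_zero r.2, ?_⟩
      have hr' : (r : R) • A0.mkQ v = 0 := hr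
      rwa [← map_smul, Submodule.mkQ_apply, Submodule.Quotient.mk_eq_zero] at hr'
    · rintro ⟨r, hr, h⟩
      refine ⟨⟨r, mem_nonZeroDivisors_of_ne_zero hr⟩, ?_⟩
      change r • A0.mkQ v = 0
      rwa [← map_smul, Submodule.mkQ_apply, Submodule.Quotient.mk_eq_zero]
  have hsat : ∀ (r : R) (v : V), r ≠ 0 → r • v ∈ A' → v ∈ A' := by
    intro r v hr h
    obtain ⟨s, hs, h⟩ := (hmem _).mp h
    exact (hmem _).mpr ⟨s * r, mul_ne_zero hs hr, by rwa [mul_smul]⟩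
  have hAA : ∀ m : M, ev m ∈ A' → m ∈ A := by
    intro m hm
    obtain ⟨r, hr, x, hx, h⟩ := (hmem _).mp hm
    rw [← map_smul] at h
    have h' := hinj h
    have h2 : r • A.mkQ m = 0 := by
      rw [← map_smul, Submodule.mkQ_apply, Submodule.Quotient.mk_eq_zero, ← h']
      exact hx
    have h3 := (smul_eq_zero.mp h2).resolve_left hr
    rwa [Submodule.mkQ_apply, Submodule.Quotient.mk_eq_zero] at h3
  have hle : ∀ m ∈ A, ev m ∈ A' := fun m hm =>
    (hmem _).mpr ⟨1, one_ne_zero, by rw [one_smul]; exact ⟨m, hm, rfl⟩⟩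
  have hA'r : IsReflexive R A' := sat_refl G V A' hsat
  let fA : A →ₗ[R] A' := (ev ∘ₗ A.subtype).codRestrict A' fun m => hle m m.2
  have hfA : Function.Injective fA := by
    intro x y hxy
    exact Subtype.ext (hinj (congrArg Subtype.val hxy))
  let fB : (M ⧸ A) →ₗ[R] ((V ⧸ A0) ⧸ T) :=
    T.mkQ ∘ₗ A.mapQ A0 ev (Submodule.le_comap_map ev A)
  have hfB : Function.Injective fB := by
    rw [← LinearMap.ker_eq_bot, eq_bot_iff]
    intro x hx
    obtain ⟨m, rfl⟩ := Submodule.mkQ_surjective _ x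
    have h1 : T.mkQ (A0.mkQ (ev m)) = 0 := hx
    rw [Submodule.mkQ_apply, Submodule.Quotient.mk_eq_zero] at h1
    have h2 := hAA m h1
    rw [Submodule.mem_bot, Submodule.mkQ_apply, Submodule.Quotient.mk_eq_zero]
    exact h2
  obtain ⟨hfinN, k, hk⟩ := fact1 G ((V ⧸ A0) ⧸ T)
  have hAc : ∀ c : R, ∀ q : A', c • (q : V) ∈ LinearMap.range ev → c • q ∈ LinearMap.range fA := by
    rintro c q ⟨m, hm⟩
    refine ⟨⟨m, hAA m (by rw [hm]; exact A'.smul_mem c q.2)⟩, Subtype.ext hm⟩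
  have hBc : ∀ c : R, (∀ v : V, c • v ∈ LinearMap.range ev) → ∀ q, c • q ∈ LinearMap.range fB := by
    intro c hc q
    obtain ⟨q, rfl⟩ := Submodule.mkQ_surjective _ q
    obtain ⟨v, rfl⟩ := Submodule.mkQ_surjective _ q
    obtain ⟨m, hm⟩ := hc v
    refine ⟨A.mkQ m, ?_⟩
    rw [← map_smul, ← map_smul, ← hm]
    rfl
  let evN := Dual.eval R ((V ⧸ A0) ⧸ T)
  have hevN : Function.Injective evN := eval_inj _
  have hNc : ∀ c : R, (∀ q, c ^ n • q ∈ LinearMap.range fB) →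
      (∀ z, c ^ k • z ∈ LinearMap.range evN) →
      ∀ z, c ^ (n + k) • z ∈ LinearMap.range (evN ∘ₗ fB) := by
    intro c h1 h2 z
    obtain ⟨y, hy⟩ := h2 z
    obtain ⟨x, hx⟩ := h1 y
    refine ⟨x, ?_⟩
    rw [LinearMap.comp_apply, hx, map_smul, hy, pow_add, mul_smul]
  have hBa := hBc (a ^ n) fun v => (hn v).1
  have hBb := hBc (b ^ n) fun v => (hn v).2
  have hNr : IsReflexive R (Dual R (Dual R ((V ⧸ A0) ⧸ T))) := ddual_refl G _
  obtain ⟨eA⟩ := coker_equiv G fA hfA n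
    fun q => ⟨hAc _ q (hn q).1, hAc _ q (hn q).2⟩
  obtain ⟨eB⟩ := coker_equiv G (evN ∘ₗ fB) (hevN.comp hfB) (n + k)
    fun z => ⟨hNc a hBa (fun z => (hk z).1) z, hNc b hBb (fun z => (hk z).2) z⟩
  have l1 := eA.length_eq
  have l2 := eB.length_eq
  rw [length_comp fB evN hevN] at l2
  have l3 : Module.length R (V ⧸ LinearMap.range ev) =
      Module.length R (A' ⧸ LinearMap.range fA) +
        Module.length R (((V ⧸ A0) ⧸ T) ⧸ LinearMap.range fB) := by
    have h1 : LinearMap.range fA ≤ (LinearMap.range ev).comap A'.subtype := by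
      rintro _ ⟨x, rfl⟩; exact ⟨x, rfl⟩
    have h2 : LinearMap.range ev ≤ (LinearMap.range fB).comap (T.mkQ ∘ₗ A0.mkQ) := by
      rintro _ ⟨x, rfl⟩; exact ⟨A.mkQ x, rfl⟩
    refine Module.length_eq_add_of_exact (Submodule.mapQ _ _ A'.subtype h1)
      (Submodule.mapQ _ _ (T.mkQ ∘ₗ A0.mkQ) h2) ?_ ?_ ?_
    · rw [← LinearMap.ker_eq_bot, eq_bot_iff]
      intro x hx
      obtain ⟨q, rfl⟩ := Submodule.mkQ_surjective _ x
      have h3 : (LinearMap.range ev).mkQ (q : V) = 0 := hx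
      rw [Submodule.mkQ_apply, Submodule.Quotient.mk_eq_zero] at h3
      have h4 := hAc 1 q (by rwa [one_smul])
      rw [one_smul] at h4
      rw [Submodule.mem_bot, Submodule.mkQ_apply, Submodule.Quotient.mk_eq_zero]
      exact h4
    · intro x
      obtain ⟨x, rfl⟩ := Submodule.mkQ_surjective _ x
      obtain ⟨x, rfl⟩ := Submodule.mkQ_surjective _ x
      obtain ⟨v, rfl⟩ := Submodule.mkQ_surjective _ x
      exact ⟨Submodule.mkQ _ v, rfl⟩
    · intro x
      obtain ⟨v, rfl⟩ := Submodule.mkQ_surjective _ x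
      constructor
      · intro hx
        have h3 : (LinearMap.range fB).mkQ (T.mkQ (A0.mkQ v)) = 0 := hx
        rw [Submodule.mkQ_apply, Submodule.Quotient.mk_eq_zero] at h3
        obtain ⟨y, hy⟩ := h3
        obtain ⟨m, rfl⟩ := Submodule.mkQ_surjective _ y
        have hy' : T.mkQ (A0.mkQ (ev m)) = T.mkQ (A0.mkQ v) := hy
        have h5 : T.mkQ (A0.mkQ (v - ev m)) = 0 := by
          rw [map_sub, map_sub, hy', sub_self]
        rw [Submodule.mkQ_apply, Submodule.Quotient.mk_eq_zero] at h5
        refine ⟨Submodule.mkQ _ ⟨v - ev m, h5⟩, ?_⟩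
        change (LinearMap.range ev).mkQ (v - ev m) = (LinearMap.range ev).mkQ v
        rw [map_sub, sub_eq_self, Submodule.mkQ_apply, Submodule.Quotient.mk_eq_zero]
        exact ⟨m, rfl⟩
      · rintro ⟨y, hy⟩
        obtain ⟨q, rfl⟩ := Submodule.mkQ_surjective _ y
        rw [← hy]
        change (LinearMap.range fB).mkQ (T.mkQ (A0.mkQ (q : V))) = 0
        have : T.mkQ (A0.mkQ (q : V)) = 0 := by
          rw [Submodule.mkQ_apply, Submodule.Quotient.mk_eq_zero]
          exact q.2
        rw [this, map_zero]
  rw [l1, l2, l3, add_assoc]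

theorem stmt_3 {R : Type*} [CommRing R] [IsDomain R] [IsNoetherianRing R] [IsLocalRing R]
    -- `R` is a regular local ring of Krull dimension 2
    (hdim : ringKrullDim R = 2)
    (hreg : ∃ a b : R, Ideal.span {a, b} = IsLocalRing.maximalIdeal R)
    {M : Type*} [AddCommGroup M] [Module R M] [Module.Finite R M]
    -- `M` is torsion-free of rank 2
    (htfM : Submodule.torsion R M = ⊥)
    (hrkM : Module.finrank (FractionRing R) (LocalizedModule (nonZeroDivisors R) M) = 2)
    -- `A ⊆ M` is a submodule of rank 1
    (A : Submodule R M)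
    (hrkA : Module.finrank (FractionRing R) (LocalizedModule (nonZeroDivisors R) ↥A) = 1)
    -- the quotient `B := M ⧸ A` is torsion-free
    (htfB : Submodule.torsion R (M ⧸ A) = ⊥) :
    -- `A^{∨∨}/A`, `M^{∨∨}/M`, `B^{∨∨}/B` and `N^{∨∨}/N` have finite length, where `A` is
    -- regarded inside `M^{∨∨}` via `ε_M` and `N := (M^{∨∨}/A)/Tors(M^{∨∨}/A)`, and
    -- `length(A^{∨∨}/A) + length(B^{∨∨}/B) = length(M^{∨∨}/M) + length(N^{∨∨}/N)`
    IsFiniteLength R (evalCoker R ↥A) ∧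
    IsFiniteLength R (evalCoker R M) ∧
    IsFiniteLength R (evalCoker R (M ⧸ A)) ∧
    IsFiniteLength R (evalCoker R
      ((Dual R (Dual R M) ⧸ A.map (Module.Dual.eval R M)) ⧸
        Submodule.torsion R (Dual R (Dual R M) ⧸ A.map (Module.Dual.eval R M)))) ∧
    ∃ a b c d : ℕ,
      HasLength R (evalCoker R ↥A) a ∧
      HasLength R (evalCoker R M) b ∧
      HasLength R (evalCoker R (M ⧸ A)) c ∧
      HasLength R (evalCoker R
        ((Dual R (Dual R M) ⧸ A.map (Module.Dual.eval R M)) ⧸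
          Submodule.torsion R (Dual R (Dual R M) ⧸ A.map (Module.Dual.eval R M)))) d ∧
      a + c = b + d := by
  obtain ⟨a, b, hab⟩ := hreg
  have G := goodRing hdim a b hab
  have hM : IsTorsionFree R M := Submodule.isTorsionFree_iff_torsion_eq_bot.mpr htfM
  have hB : IsTorsionFree R (M ⧸ A) := Submodule.isTorsionFree_iff_torsion_eq_bot.mpr htfB
  have hVr : IsReflexive R (Dual R (Dual R M)) := ddual_refl G M
  obtain ⟨hfinM, n, hn⟩ := fact1 G M
  have hc := core G (Dual.eval R M) (eval_inj M) n hn A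
  have hfA := (fact1 G A).1
  have hfB := (fact1 G (M ⧸ A)).1
  have hfN := (fact1 G ((Dual R (Dual R M) ⧸ A.map (Module.Dual.eval R M)) ⧸
    Submodule.torsion R (Dual R (Dual R M) ⧸ A.map (Module.Dual.eval R M)))).1
  refine ⟨hfA, hfinM, hfB, hfN, ?_⟩
  obtain ⟨p, hp, hp'⟩ := hasLength_of hfA
  obtain ⟨q, hq, hq'⟩ := hasLength_of hfinM
  obtain ⟨r, hr, hr'⟩ := hasLength_of hfB
  obtain ⟨s, hs, hs'⟩ := hasLength_of hfN
  refine ⟨p, q, r, s, hp, hq, hr, hs, ?_⟩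
  rw [hp', hq', hr', hs'] at hc
  exact_mod_cast hc
end

section
/- Let R be a regular local ring of Krull dimension 2, and let A ⊆ A′ be finitely generated torsion-free R-modules of rank 1 such that the quotient A′/A has finite length. Then the map A^{∨∨} → A′^{∨∨} obtained by dualizing the inclusion A → A′ twice is an isomorphism, the modules A^{∨∨}/A and A′^{∨∨}/A′ have finite length, and length(A^{∨∨}/A) = length(A′^{∨∨}/A′) + length(A′/A). -/
/-!
Statement 4 (local form of step (2)(b) in Corollary 3.2 of the paper): over a regular local ring
of Krull dimension 2, if `A ⊆ A'` are finitely generated torsion-free rank 1 modules with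
`A'/A` of finite length, then the double dual of the inclusion is an isomorphism
`A^{∨∨} ≅ A'^{∨∨}`, the modules `A^{∨∨}/A` and `A'^{∨∨}/A'` have finite length, and
`length(A^{∨∨}/A) = length(A'^{∨∨}/A') + length(A'/A)`.
-/

open Module LinearMap

namespace Stmt4Aux

lemma prime_eq_span {R : Type*} [CommRing R] [IsNoetherianRing R] [IsLocalRing R]
    {a b : R} (hab : Ideal.span {a, b} = IsLocalRing.maximalIdeal R)
    (P : Ideal R) (hP : P.IsPrime) (ha : a ∈ P) (hb : b ∉ P) : P = Ideal.span {a} := by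
  apply le_antisymm
  · refine Submodule.le_of_le_smul_of_le_jacobson_bot (I := IsLocalRing.maximalIdeal R)
      (IsNoetherian.noetherian P) (IsLocalRing.maximalIdeal_le_jacobson _) ?_
    intro x hx
    have hxm : x ∈ Ideal.span {a, b} := hab ▸ IsLocalRing.le_maximalIdeal hP.ne_top hx
    obtain ⟨r, s, rfl⟩ := Ideal.mem_span_pair.mp hxm
    have hs : s ∈ P := by
      have : s * b ∈ P := (P.add_mem_iff_right (P.mul_mem_left r ha)).mp hx
      exact (hP.mem_or_mem this).resolve_right hb
    refine Submodule.add_mem_sup (Ideal.mul_mem_left _ _ (Ideal.mem_span_singleton_self a)) ?_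
    rw [mul_comm]
    exact Submodule.smul_mem_smul (hab ▸ Ideal.subset_span (by simp)) hs
  · exact (Ideal.span_singleton_le_iff_mem P).mpr ha

lemma not_principal_max {R : Type*} [CommRing R] [IsNoetherianRing R] [IsLocalRing R]
    (hdim : ringKrullDim R = 2) (a : R)
    (h : IsLocalRing.maximalIdeal R ∈ (Ideal.span {a}).minimalPrimes) : False := by
  have h1 := Ideal.height_le_one_of_isPrincipal_of_mem_minimalPrimes _ _ h
  have h2 := IsLocalRing.maximalIdeal_height_eq_ringKrullDim (R := R)
  rw [hdim] at h2
  have h3 : (IsLocalRing.maximalIdeal R).height = 2 := WithBot.coe_injective h2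
  rw [h3] at h1
  exact absurd h1 (by decide)

lemma prime_a {R : Type*} [CommRing R] [IsDomain R] [IsNoetherianRing R] [IsLocalRing R]
    (hdim : ringKrullDim R = 2)
    {a b : R} (hab : Ideal.span {a, b} = IsLocalRing.maximalIdeal R) :
    Prime a ∧ ¬ a ∣ b := by
  have ham : Ideal.span {a} ≤ IsLocalRing.maximalIdeal R := by
    rw [← hab]; exact Ideal.span_mono (by simp)
  obtain ⟨P, hPmin, hPm⟩ := Ideal.exists_minimalPrimes_le ham
  have hP : P.IsPrime := hPmin.1.1
  have haP : a ∈ P := hPmin.1.2 (Ideal.mem_span_singleton_self a)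
  have hbP : b ∉ P := by
    intro hb
    have : IsLocalRing.maximalIdeal R ≤ P := by
      rw [← hab, Ideal.span_le]
      rintro x (rfl | rfl) <;> assumption
    have := le_antisymm hPm this
    exact not_principal_max hdim a (this ▸ hPmin)
  have hPa := prime_eq_span hab P hP haP hbP
  have ha0 : a ≠ 0 := by
    rintro rfl
    apply not_principal_max hdim b
    have : Ideal.span {b} = IsLocalRing.maximalIdeal R := by
      rw [← hab, Ideal.span_insert_zero]
    rw [this, Ideal.minimalPrimes_eq_subsingleton_self]
    rfl
  refine ⟨(Ideal.span_singleton_prime ha0).mp (hPa ▸ hP), fun h => hbP ?_⟩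
  rw [hPa]; exact Ideal.mem_span_singleton.mpr h

lemma prime_principal {R : Type*} [CommRing R] [IsDomain R] [IsNoetherianRing R] [IsLocalRing R]
    (hdim : ringKrullDim R = 2)
    {a b : R} (hab : Ideal.span {a, b} = IsLocalRing.maximalIdeal R)
    (P : Ideal R) (hP : P.IsPrime) (hPm : P ≠ IsLocalRing.maximalIdeal R) :
    ∃ p, P = Ideal.span {p} := by
  obtain ⟨hpa, hnd⟩ := prime_a hdim hab
  by_cases ha : a ∈ P
  · refine ⟨a, prime_eq_span hab P hP ha fun hb => hPm ?_⟩
    apply le_antisymm (IsLocalRing.le_maximalIdeal hP.ne_top)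
    rw [← hab, Ideal.span_le]
    rintro x (rfl | rfl) <;> assumption
  · have hprime : (Ideal.span {a}).IsPrime := (Ideal.span_singleton_prime hpa.ne_zero).mpr hpa
    have : Nontrivial (R ⧸ Ideal.span {a}) := Ideal.Quotient.nontrivial_iff.mpr hprime.ne_top
    have : IsLocalRing (R ⧸ Ideal.span {a}) :=
      IsLocalRing.of_surjective' (Ideal.Quotient.mk _) Ideal.Quotient.mk_surjective
    have hmax : (IsLocalRing.maximalIdeal (R ⧸ Ideal.span {a})).IsPrincipal := by
      refine ⟨Ideal.Quotient.mk _ b, ?_⟩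
      change _ = Ideal.span _
      apply le_antisymm
      · intro x hx
        obtain ⟨x, rfl⟩ := Ideal.Quotient.mk_surjective x
        have hxm : x ∈ Ideal.span {a, b} := by
          rw [hab, IsLocalRing.mem_maximalIdeal]
          intro hu
          exact (IsLocalRing.mem_maximalIdeal _).mp hx (hu.map _)
        obtain ⟨r, s, rfl⟩ := Ideal.mem_span_pair.mp hxm
        rw [Ideal.mem_span_singleton]
        refine ⟨Ideal.Quotient.mk _ s, ?_⟩
        rw [map_add, map_mul, map_mul,
          Ideal.Quotient.eq_zero_iff_mem.mpr (Ideal.mem_span_singleton_self a)]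
        ring
      · rw [Ideal.span_singleton_le_iff_mem, IsLocalRing.mem_maximalIdeal]
        intro hu
        obtain ⟨c, hc⟩ := hu.exists_right_inv
        obtain ⟨c, rfl⟩ := Ideal.Quotient.mk_surjective c
        rw [← map_mul, ← map_one (Ideal.Quotient.mk (Ideal.span {a})), Ideal.Quotient.eq] at hc
        have h1 : b * c - 1 ∈ Ideal.span {a, b} := Ideal.span_mono (by simp) hc
        have h2 : b * c ∈ Ideal.span {a, b} :=
          Ideal.mul_mem_right _ _ (Ideal.subset_span (by simp))
        have h3 : (1 : R) ∈ Ideal.span {a, b} := by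
          have := Ideal.sub_mem _ h2 h1
          simpa using this
        rw [hab] at h3
        exact (IsLocalRing.mem_maximalIdeal _).mp h3 isUnit_one
    have hpir : IsPrincipalIdealRing (R ⧸ Ideal.span {a}) :=
      ((tfae_of_isNoetherianRing_of_isLocalRing_of_isDomain (R ⧸ Ideal.span {a})).out 4 0).mp hmax
    obtain ⟨q, hq⟩ := (hpir.principal (P.map (Ideal.Quotient.mk (Ideal.span {a}))))
    change _ = Ideal.span {q} at hq
    have hqm : q ∈ P.map (Ideal.Quotient.mk (Ideal.span {a})) := by
      rw [hq]; exact Ideal.mem_span_singleton_self q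
    obtain ⟨p, hpP, rfl⟩ :=
      (Ideal.mem_map_iff_of_surjective _ Ideal.Quotient.mk_surjective).mp hqm
    refine ⟨p, le_antisymm ?_ ((Ideal.span_singleton_le_iff_mem P).mpr hpP)⟩
    refine Submodule.le_of_le_smul_of_le_jacobson_bot (I := IsLocalRing.maximalIdeal R)
      (IsNoetherian.noetherian P) (IsLocalRing.maximalIdeal_le_jacobson _) ?_
    intro x hx
    have hx' := Ideal.mem_map_of_mem (Ideal.Quotient.mk (Ideal.span {a})) hx
    rw [hq, Ideal.mem_span_singleton] at hx'
    obtain ⟨r, hr⟩ := hx'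
    obtain ⟨r, rfl⟩ := Ideal.Quotient.mk_surjective r
    rw [← map_mul, Ideal.Quotient.eq, Ideal.mem_span_singleton] at hr
    obtain ⟨t, ht⟩ := hr
    have htP : t ∈ P := by
      have : a * t ∈ P := ht ▸ P.sub_mem hx (P.mul_mem_right _ hpP)
      exact (hP.mem_or_mem this).resolve_left ha
    have hxe : x = p * r + a * t := by rw [← ht]; ring
    rw [hxe]
    exact Submodule.add_mem_sup (Ideal.mul_mem_right _ _ (Ideal.mem_span_singleton_self p))
      (Submodule.smul_mem_smul (hab ▸ Ideal.subset_span (by simp)) htP)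

lemma pow_kills {R : Type*} [CommRing R] [IsLocalRing R] {a : R}
    (ha : a ∈ IsLocalRing.maximalIdeal R) {M : Type*} [AddCommGroup M] [Module R M]
    (h : IsFiniteLength R M) : ∃ N : ℕ, ∀ n ≥ N, ∀ x : M, a ^ n • x = 0 := by
  suffices ∃ N : ℕ, ∀ x : M, a ^ N • x = 0 by
    obtain ⟨N, hN⟩ := this
    refine ⟨N, fun n hn x => ?_⟩
    rw [← Nat.sub_add_cancel hn, pow_add, mul_smul, hN, smul_zero]
  induction h with
  | of_subsingleton => exact ⟨0, fun x => Subsingleton.elim _ _⟩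
  | @of_simple_quotient M _ _ N hs _ ih =>
    obtain ⟨n, hn⟩ := ih
    have hmax := IsSimpleModule.annihilator_isMaximal (R := R) (M := M ⧸ N)
    rw [IsLocalRing.eq_maximalIdeal hmax |>.symm] at ha
    refine ⟨n + 1, fun x => ?_⟩
    have hx : a • x ∈ N := by
      rw [← Submodule.Quotient.mk_eq_zero, Submodule.Quotient.mk_smul]
      exact Module.mem_annihilator.mp ha _
    have := congrArg Subtype.val (hn ⟨a • x, hx⟩)
    simpa [pow_succ, mul_smul] using this

lemma dual_bij {R : Type*} [CommRing R] [IsDomain R] [IsLocalRing R]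
    {a b : R} (hpa : Prime a) (hnd : ¬ a ∣ b)
    (ha : a ∈ IsLocalRing.maximalIdeal R) (hb : b ∈ IsLocalRing.maximalIdeal R)
    {A B : Type*} [AddCommGroup A] [Module R A] [AddCommGroup B] [Module R B]
    (f : A →ₗ[R] B) (hf : Function.Injective f)
    (hfl : IsFiniteLength R (B ⧸ LinearMap.range f)) : Function.Bijective f.dualMap := by
  obtain ⟨N1, h1⟩ := pow_kills ha hfl
  obtain ⟨N2, h2⟩ := pow_kills hb hfl
  obtain ⟨n, hn1, hn2⟩ : ∃ n, N1 ≤ n ∧ N2 ≤ n := ⟨max N1 N2, le_max_left _ _, le_max_right _ _⟩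
  have hs : ∀ x : B, ∃ y : A, f y = a ^ n • x := fun x => by
    have := h1 n hn1 (Submodule.Quotient.mk x)
    rwa [← Submodule.Quotient.mk_smul, Submodule.Quotient.mk_eq_zero] at this
  have ht : ∀ x : B, ∃ y : A, f y = b ^ n • x := fun x => by
    have := h2 n hn2 (Submodule.Quotient.mk x)
    rwa [← Submodule.Quotient.mk_smul, Submodule.Quotient.mk_eq_zero] at this
  choose s hs using hs
  choose t ht using ht
  have han : a ^ n ≠ 0 := pow_ne_zero _ hpa.ne_zero
  constructor
  · rw [injective_iff_map_eq_zero]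
    intro g hg
    ext x
    have : g (f (s x)) = 0 := LinearMap.congr_fun hg (s x)
    rw [hs, map_smul, smul_eq_mul] at this
    simpa using (mul_eq_zero.mp this).resolve_left han
  · intro g
    have key : ∀ x, ∃ y, g (s x) = a ^ n * y := by
      intro x
      have h : b ^ n • s x = a ^ n • t x := by
        apply hf
        rw [map_smul, map_smul, hs, ht, smul_comm]
      have h' := congrArg g h
      rw [map_smul, map_smul, smul_eq_mul, smul_eq_mul] at h'
      refine hpa.pow_dvd_of_dvd_mul_left n (a := b ^ n) (fun hd => hnd (hpa.dvd_of_dvd_pow hd)) ?_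
      exact ⟨_, h'⟩
    choose w hw using key
    refine ⟨{ toFun := w, map_add' := fun x y => ?_, map_smul' := fun r x => ?_ }, ?_⟩
    · apply mul_left_cancel₀ han
      rw [mul_add, ← hw, ← hw, ← hw, ← map_add]
      congr 1
      apply hf
      simp [hs]
    · apply mul_left_cancel₀ han
      simp only [RingHom.id_apply, smul_eq_mul]
      rw [mul_left_comm, ← hw, ← hw, ← smul_eq_mul, ← map_smul]
      congr 1
      apply hf
      rw [map_smul, hs, hs, smul_comm]
    · ext x
      apply mul_left_cancel₀ han
      change a ^ n * w (f x) = _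
      rw [← hw, ← smul_eq_mul, ← map_smul]
      congr 1
      apply hf
      rw [map_smul, hs]

lemma bidual_bij {R : Type*} [CommRing R] 
    {A B : Type*} [AddCommGroup A] [Module R A] [AddCommGroup B] [Module R B]
    (f : A →ₗ[R] B) (hf : Function.Bijective f.dualMap) :
    Function.Bijective f.dualMap.dualMap := by
  have := (LinearEquiv.ofBijective f.dualMap hf).dualMap.bijective
  exact this

lemma length_add {R : Type*} [CommRing R] 
    {A B : Type*} [AddCommGroup A] [Module R A] [AddCommGroup B] [Module R B]
    (f : A →ₗ[R] B) (hf : Function.Bijective f.dualMap.dualMap)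
    (hB : Function.Injective (Module.Dual.eval R B)) :
    Module.length R (evalCoker R A) =
      Module.length R (B ⧸ LinearMap.range f) + Module.length R (evalCoker R B) := by
  let e := LinearEquiv.ofBijective f.dualMap.dualMap hf
  have nat : ∀ x, f.dualMap.dualMap (Module.Dual.eval R A x) = Module.Dual.eval R B (f x) :=
    fun x => by ext; rfl
  have hes : ∀ y, f.dualMap.dualMap (e.symm y) = y := fun y => e.apply_symm_apply y
  have hse : ∀ y, e.symm (f.dualMap.dualMap y) = y := fun y => e.symm_apply_apply y
  let i : (B ⧸ LinearMap.range f) →ₗ[R] evalCoker R A :=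
    Submodule.mapQ _ _ (e.symm.toLinearMap ∘ₗ Module.Dual.eval R B) (by
      rintro _ ⟨x, rfl⟩
      refine ⟨x, ?_⟩
      simp only [LinearMap.comp_apply, LinearEquiv.coe_coe]
      rw [← nat, hse])
  let p : evalCoker R A →ₗ[R] evalCoker R B :=
    Submodule.mapQ _ _ f.dualMap.dualMap (by
      rintro _ ⟨x, rfl⟩
      exact ⟨f x, (nat x).symm⟩)
  refine Module.length_eq_add_of_exact i p ?_ ?_ ?_
  · rw [injective_iff_map_eq_zero]
    intro y hy
    obtain ⟨y, rfl⟩ := Submodule.Quotient.mk_surjective _ y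
    simp only [i, Submodule.mapQ_apply, Submodule.Quotient.mk_eq_zero] at hy ⊢
    obtain ⟨x, hx⟩ := hy
    refine ⟨x, hB ?_⟩
    rw [← nat, hx]
    exact hes _
  · intro y
    obtain ⟨y, rfl⟩ := Submodule.Quotient.mk_surjective _ y
    exact ⟨Submodule.Quotient.mk (e.symm y), congrArg Submodule.Quotient.mk (hes y)⟩
  · intro z
    obtain ⟨z, rfl⟩ := Submodule.Quotient.mk_surjective _ z
    constructor
    · intro hz
      simp only [p, Submodule.mapQ_apply, Submodule.Quotient.mk_eq_zero] at hz
      obtain ⟨y, hy⟩ := hz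
      refine ⟨Submodule.Quotient.mk y, congrArg Submodule.Quotient.mk ?_⟩
      simp only [LinearMap.comp_apply, LinearEquiv.coe_coe]
      rw [hy, hse]
    · rintro ⟨y, hy⟩
      obtain ⟨y, rfl⟩ := Submodule.Quotient.mk_surjective _ y
      rw [← hy]
      simp only [p, i, Submodule.mapQ_apply, Submodule.Quotient.mk_eq_zero]
      exact ⟨y, (hes _).symm⟩

lemma exists_embedding {R : Type*} [CommRing R] [IsDomain R]
    {M : Type*} [AddCommGroup M] [Module R M] [Module.Finite R M]
    (htf : Submodule.torsion R M = ⊥)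
    (hrk : Module.finrank (FractionRing R) (LocalizedModule (nonZeroDivisors R) M) = 1) :
    ∃ φ : M →ₗ[R] R, Function.Injective φ := by
  obtain ⟨e⟩ := Module.nonempty_linearEquiv_of_finrank_eq_one hrk
  let ψ : M →ₗ[R] FractionRing R :=
    (e.symm.toLinearMap.restrictScalars R) ∘ₗ LocalizedModule.mkLinearMap (nonZeroDivisors R) M
  have hψ : Function.Injective ψ := by
    refine e.symm.injective.comp ?_
    rw [injective_iff_map_eq_zero]
    intro x hx
    rw [← LinearMap.mem_ker, LocalizedModule.mem_ker_mkLinearMap_iff] at hx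
    obtain ⟨r, hr, hx⟩ := hx
    have : x ∈ Submodule.torsion R M := ⟨⟨r, hr⟩, hx⟩
    rwa [htf] at this
  obtain ⟨d, hd, hI⟩ := FractionalIdeal.isFractional_of_fg (S := nonZeroDivisors R)
    (I := LinearMap.range ψ) (Submodule.FG.of_finite)
  have hI' : ∀ x, ∃ r : R, algebraMap R (FractionRing R) r = d • ψ x := fun x => hI _ ⟨x, rfl⟩
  choose w hw using hI'
  have hinj := IsFractionRing.injective R (FractionRing R)
  refine ⟨{ toFun := w, map_add' := fun x y => ?_, map_smul' := fun r x => ?_ }, ?_⟩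
  · apply hinj; simp [hw]
  · apply hinj
    rw [hw, map_smul, RingHom.id_apply, smul_eq_mul, map_mul, hw, smul_comm, Algebra.smul_def r]
  · intro x y hxy
    have h : w x = w y := hxy
    have h2 := hw x
    rw [h, hw y, Algebra.smul_def, Algebra.smul_def] at h2
    refine (hψ (mul_left_cancel₀ ?_ h2)).symm
    exact fun h0 => nonZeroDivisors.ne_zero hd (hinj (by simpa using h0))

lemma exists_good {R : Type*} [CommRing R] [IsDomain R] [IsNoetherianRing R] [IsLocalRing R]
    (hdim : ringKrullDim R = 2)
    {a b : R} (hab : Ideal.span {a, b} = IsLocalRing.maximalIdeal R)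
    {M : Type*} [AddCommGroup M] [Module R M] [Module.Finite R M]
    (htf : Submodule.torsion R M = ⊥)
    (hrk : Module.finrank (FractionRing R) (LocalizedModule (nonZeroDivisors R) M) = 1) :
    ∃ φ : M →ₗ[R] R, Function.Injective φ ∧ IsFiniteLength R (R ⧸ LinearMap.range φ) := by
  let S : Set (Ideal R) := {J | ∃ φ : M →ₗ[R] R, Function.Injective φ ∧ LinearMap.range φ = J}
  have hS : S.Nonempty := by
    obtain ⟨φ, hφ⟩ := exists_embedding htf hrk
    exact ⟨_, φ, hφ, rfl⟩
  obtain ⟨J, ⟨φ, hφ, hJ⟩, hmax⟩ := set_has_maximal_iff_noetherian.mpr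
    (inferInstanceAs (IsNoetherian R R)) S hS
  have hJ0 : J ≠ ⊥ := by
    rintro rfl
    have h0 : ∀ x, φ x = 0 := fun x => by
      have : φ x ∈ LinearMap.range φ := ⟨x, rfl⟩
      rwa [hJ] at this
    have : Subsingleton M := ⟨fun x y => hφ (by rw [h0, h0])⟩
    have : Subsingleton (LocalizedModule (nonZeroDivisors R) M) := inferInstance
    rw [Module.finrank_zero_of_subsingleton] at hrk
    exact zero_ne_one hrk
  have hprime : ∀ P : Ideal R, P.IsPrime → J ≤ P → P = IsLocalRing.maximalIdeal R := by
    intro P hP hJP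
    by_contra hPm
    obtain ⟨p, rfl⟩ := prime_principal hdim hab P hP hPm
    have hp0 : p ≠ 0 := by
      rintro rfl
      apply hJ0
      rw [eq_bot_iff]; simpa using hJP
    have hdvd : ∀ x, ∃ y, φ x = p * y := fun x =>
      Ideal.mem_span_singleton.mp (hJP (hJ ▸ ⟨x, rfl⟩))
    choose w hw using hdvd
    let φ' : M →ₗ[R] R :=
      { toFun := w
        map_add' := fun x y => by
          apply mul_left_cancel₀ hp0
          rw [mul_add, ← hw, ← hw, ← hw, map_add]
        map_smul' := fun r x => by
          apply mul_left_cancel₀ hp0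
          rw [← hw, map_smul, hw, RingHom.id_apply, smul_eq_mul, smul_eq_mul]
          ring }
    have hφ' : Function.Injective φ' := fun x y h => hφ (by
      rw [hw, hw]; exact congrArg (p * ·) h)
    have hle : J ≤ LinearMap.range φ' := by
      rw [← hJ]
      rintro _ ⟨x, rfl⟩
      exact ⟨p • x, by rw [map_smul, hw]; rfl⟩
    have heq : J = LinearMap.range φ' := by
      by_contra hne
      exact hmax _ ⟨φ', hφ', rfl⟩ (lt_of_le_of_ne hle hne)
    apply hJ0
    refine Submodule.eq_bot_of_le_smul_of_le_jacobson_bot (Ideal.span {p}) J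
      (IsNoetherian.noetherian J) ?_ ((IsLocalRing.le_maximalIdeal hP.ne_top).trans
        (IsLocalRing.maximalIdeal_le_jacobson _))
    intro x hx
    rw [← hJ] at hx
    obtain ⟨y, rfl⟩ := hx
    rw [hw]
    exact Submodule.smul_mem_smul (Ideal.mem_span_singleton_self p) (heq ▸ ⟨y, rfl⟩)
  refine ⟨φ, hφ, ?_⟩
  rw [hJ]
  have hk : Ring.KrullDimLE 0 (R ⧸ J) := by
    rw [Ideal.krullDimLE_zero_quotient_iff_forall_minimalPrimes_isMaximal]
    intro P hP
    rw [hprime P hP.1.1 hP.1.2]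
    exact IsLocalRing.maximalIdeal.isMaximal R
  have hart : IsArtinianRing (R ⧸ J) := IsNoetherianRing.isArtinianRing_of_krullDimLE_zero
  rw [isFiniteLength_iff_isNoetherian_isArtinian]
  refine ⟨inferInstance, ?_⟩
  exact isArtinian_of_surjective_algebraMap (Ideal.Quotient.mk_surjective (I := J))

lemma hasLength_of {R : Type*} [CommRing R] {P : Type*} [AddCommGroup P] [Module R P]
    (h : IsFiniteLength R P) : ∃ m : ℕ, HasLength R P m ∧ (m : ℕ∞) = Module.length R P := by
  obtain ⟨s, h1, h2⟩ := isFiniteLength_iff_exists_compositionSeries.mp h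
  exact ⟨s.length, ⟨s, h1, h2, rfl⟩, Module.length_compositionSeries s h1 h2⟩

end Stmt4Aux

theorem stmt_4 {R : Type*} [CommRing R] [IsDomain R] [IsNoetherianRing R] [IsLocalRing R]
    -- `R` is a regular local ring of Krull dimension 2
    (hdim : ringKrullDim R = 2)
    (hreg : ∃ a b : R, Ideal.span {a, b} = IsLocalRing.maximalIdeal R)
    {A' : Type*} [AddCommGroup A'] [Module R A'] [Module.Finite R A']
    -- `A'` is torsion-free of rank 1
    (htfA' : Submodule.torsion R A' = ⊥)
    (hrkA' : Module.finrank (FractionRing R) (LocalizedModule (nonZeroDivisors R) A') = 1)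
    -- `A ⊆ A'` is a (finitely generated, torsion-free) submodule of rank 1
    (A : Submodule R A') [Module.Finite R ↥A]
    (htfA : Submodule.torsion R ↥A = ⊥)
    (hrkA : Module.finrank (FractionRing R) (LocalizedModule (nonZeroDivisors R) ↥A) = 1)
    -- the quotient `A'/A` has finite length
    (hfl : IsFiniteLength R (A' ⧸ A)) :
    -- the bidual of the inclusion `A → A'` is an isomorphism
    Function.Bijective A.subtype.dualMap.dualMap ∧
    -- `A^{∨∨}/A` and `A'^{∨∨}/A'` have finite length
    IsFiniteLength R (evalCoker R ↥A) ∧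
    IsFiniteLength R (evalCoker R A') ∧
    -- `length(A^{∨∨}/A) = length(A'^{∨∨}/A') + length(A'/A)`
    ∃ a b c : ℕ,
      HasLength R (evalCoker R ↥A) a ∧
      HasLength R (evalCoker R A') b ∧
      HasLength R (A' ⧸ A) c ∧
      a = b + c := by
  obtain ⟨a, b, hab⟩ := hreg
  obtain ⟨hpa, hnd⟩ := Stmt4Aux.prime_a hdim hab
  have ha : a ∈ IsLocalRing.maximalIdeal R := hab ▸ Ideal.subset_span (by simp)
  have hb : b ∈ IsLocalRing.maximalIdeal R := hab ▸ Ideal.subset_span (by simp)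
  obtain ⟨φ, hφ, hφl⟩ := Stmt4Aux.exists_good hdim hab htfA' hrkA'
  have hfl' : IsFiniteLength R (A' ⧸ LinearMap.range A.subtype) := by
    rwa [Submodule.range_subtype]
  have bij1 := Stmt4Aux.bidual_bij _
    (Stmt4Aux.dual_bij hpa hnd ha hb A.subtype A.subtype_injective hfl')
  have bij2 := Stmt4Aux.bidual_bij _ (Stmt4Aux.dual_bij hpa hnd ha hb φ hφ hφl)
  have inj1 : Function.Injective (Module.Dual.eval R A') := by
    rw [injective_iff_map_eq_zero]
    intro x hx
    have : φ x = 0 := LinearMap.congr_fun hx φ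
    exact hφ (this.trans (map_zero φ).symm)
  have inj2 : Function.Injective (Module.Dual.eval R R) := by
    rw [injective_iff_map_eq_zero]
    intro x hx
    exact LinearMap.congr_fun hx LinearMap.id
  have len1 := Stmt4Aux.length_add A.subtype bij1 inj1
  have len2 := Stmt4Aux.length_add φ bij2 inj2
  have hsub : Subsingleton (evalCoker R R) := by
    rw [Submodule.Quotient.subsingleton_iff, LinearMap.range_eq_top]
    exact (Module.bijective_dual_eval R R).surjective
  rw [Module.length_eq_zero_iff.mpr hsub, add_zero] at len2
  have fin2 : IsFiniteLength R (evalCoker R A') := by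
    rw [← Module.length_ne_top_iff, len2, Module.length_ne_top_iff]
    exact hφl
  rw [Submodule.range_subtype] at len1
  have fin1 : IsFiniteLength R (evalCoker R ↥A) := by
    rw [← Module.length_ne_top_iff] at hfl fin2 ⊢
    rw [len1]
    exact WithTop.add_ne_top.mpr ⟨hfl, fin2⟩
  obtain ⟨x, hx, hx'⟩ := Stmt4Aux.hasLength_of fin1
  obtain ⟨y, hy, hy'⟩ := Stmt4Aux.hasLength_of fin2
  obtain ⟨z, hz, hz'⟩ := Stmt4Aux.hasLength_of hfl
  refine ⟨bij1, fin1, fin2, x, y, z, hx, hy, hz, ?_⟩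
  rw [← hx', ← hy', ← hz'] at len1
  rw [add_comm]
  exact_mod_cast len1
end
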